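/- arXiv:2310.11455 — 5 statements merged into one kernel-verified Lean document; each statement's English description precedes it below -/
import Mathlib

section
/- Let ε ∈ (0, 1/2) and let η₀, η₁ : [0,1] → ℂ be regular simple curves such that η₀ = η₁ on [0, ε] and on [1−ε, 1], and such that there exists a continuous map H : [0,1] × [ε, 1−ε] → ℂ with H(0,·) = η₀ restricted to [ε, 1−ε], H(1,·) = η₁ restricted to [ε, 1−ε], H(s, ε) = η₀(ε) and H(s, 1−ε) = η₀(1−ε) for all s ∈ [0,1], and H(s, t) ∉ η₀([0, ε]) ∪ η₀([1−ε, 1]) for all s ∈ [0,1] and all t ∈ (ε, 1−ε). Then the total curvatures of η₀ and η₁ agree: if θ₀ is an argument lift of η₀′ and θ₁ is an argument lift of η₁′, then θ₀(1) − θ₀(0) = θ₁(1) − θ₁(0). -/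
/-- The derivative of a curve `η : [0,1] → ℂ`, taken within `[0,1]`. -/
noncomputable def curveDeriv (η : ℝ → ℂ) : ℝ → ℂ :=
  fun t => derivWithin η (Set.Icc 0 1) t

/-- A regular curve: continuously differentiable on `[0,1]` with nonvanishing derivative. -/
def IsRegularCurve (η : ℝ → ℂ) : Prop :=
  ContDiffOn ℝ 1 η (Set.Icc 0 1) ∧ ∀ t ∈ Set.Icc (0 : ℝ) 1, curveDeriv η t ≠ 0

/-- A regular simple curve: an injective regular curve. -/
def IsRegularSimpleCurve (η : ℝ → ℂ) : Prop :=
  IsRegularCurve η ∧ Set.InjOn η (Set.Icc 0 1)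

/-- `θ` is an argument lift of the nowhere-vanishing function `g` on `[0,1]`:
`θ` is continuous and `g(t)·exp(−i·θ(t))` is a positive real number for all `t`. -/
def IsArgLift (g : ℝ → ℂ) (θ : ℝ → ℝ) : Prop :=
  ContinuousOn θ (Set.Icc 0 1) ∧
    ∀ t ∈ Set.Icc (0 : ℝ) 1, ∃ r : ℝ, 0 < r ∧
      g t * Complex.exp (-(θ t : ℂ) * Complex.I) = (r : ℂ)

section Aux

lemma aux_int_const {a b : ℝ} (hab : a ≤ b) {f : ℝ → ℝ} (hf : ContinuousOn f (Set.Icc a b))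
    (h : ∀ t ∈ Set.Icc a b, ∃ n : ℤ, f t = n * (2 * Real.pi)) : f a = f b := by
  have hp : (0 : ℝ) < 2 * Real.pi := by positivity
  have key : ∀ t ∈ Set.Icc a b, ∃ n : ℤ, (f t / (2 * Real.pi)) = n := by
    intro t ht
    obtain ⟨n, hn⟩ := h t ht
    exact ⟨n, by rw [hn]; field_simp⟩
  have hc : ContinuousOn (fun t => f t / (2 * Real.pi)) (Set.Icc a b) := hf.div_const _
  have hd : IsDiscrete (Set.range ((↑) : ℤ → ℝ)) :=
    ⟨(Int.isClosedEmbedding_coe_real.isEmbedding.toHomeomorph).symm.isEmbedding.discreteTopology⟩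
  have h1 := isPreconnected_Icc.constant_of_mapsTo (S := Set.Icc a b)
    (T := Set.range ((↑) : ℤ → ℝ)) hd hc
    (fun t ht => by obtain ⟨n, hn⟩ := key t ht; exact ⟨n, hn.symm⟩)
    (Set.left_mem_Icc.2 hab) (Set.right_mem_Icc.2 hab)
  field_simp at h1
  exact h1

lemma aux_exp_eq {a b : ℝ} (hab : a ≤ b) {l m : ℝ → ℂ} (hl : ContinuousOn l (Set.Icc a b))
    (hm : ContinuousOn m (Set.Icc a b))
    (h : ∀ t ∈ Set.Icc a b, Complex.exp (l t) = Complex.exp (m t)) :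
    (l b).im - (l a).im = (m b).im - (m a).im := by
  have := aux_int_const hab (f := fun t => (l t).im - (m t).im)
    ((Complex.continuous_im.comp_continuousOn hl).sub (Complex.continuous_im.comp_continuousOn hm))
    (fun t ht => by
      obtain ⟨n, hn⟩ := Complex.exp_eq_exp_iff_exists_int.1 (h t ht)
      refine ⟨n, ?_⟩
      rw [hn]; simp)
  linarith

lemma aux_argLift {g : ℝ → ℂ} {θ : ℝ → ℝ} (hθ : IsArgLift g θ) {l : ℝ → ℂ}
    (hl : ContinuousOn l (Set.Icc 0 1))
    (h : ∀ t ∈ Set.Icc (0 : ℝ) 1, Complex.exp (l t) = g t) :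
    θ 1 - θ 0 = (l 1).im - (l 0).im := by
  have := aux_int_const (zero_le_one (α := ℝ)) (f := fun t => (l t).im - θ t)
    ((Complex.continuous_im.comp_continuousOn hl).sub hθ.1)
    (fun t ht => by
      obtain ⟨r, hr, hr'⟩ := hθ.2 t ht
      rw [← h t ht, ← Complex.exp_add] at hr'
      have h2 : Complex.exp (l t + -(θ t : ℂ) * Complex.I) = Complex.exp (Real.log r : ℂ) := by
        rw [hr', ← Complex.ofReal_exp, Real.exp_log hr]
      obtain ⟨n, hn⟩ := Complex.exp_eq_exp_iff_exists_int.1 h2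
      refine ⟨n, ?_⟩
      have := congrArg Complex.im hn
      simp at this
      linarith)
  linarith

lemma aux_lift {a b c d : ℝ} (hab : a ≤ b) (hcd : c ≤ d) {F : ℝ × ℝ → ℂ}
    (hF : ContinuousOn F (Set.Icc a b ×ˢ Set.Icc c d))
    (h0 : ∀ x ∈ Set.Icc a b ×ˢ Set.Icc c d, F x ≠ 0) :
    ∃ L : ℝ × ℝ → ℂ, Continuous L ∧
      ∀ x ∈ Set.Icc a b ×ˢ Set.Icc c d, Complex.exp (L x) = F x := by
  let P : ℝ × ℝ → ℝ × ℝ := fun x => (Set.projIcc a b hab x.1, Set.projIcc c d hcd x.2)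
  have hP : Continuous P := by
    have h1 := (continuous_projIcc (h := hab))
    have h2 := (continuous_projIcc (h := hcd))
    fun_prop
  have hPm : ∀ x, P x ∈ Set.Icc a b ×ˢ Set.Icc c d := fun x =>
    ⟨(Set.projIcc a b hab x.1).2, (Set.projIcc c d hcd x.2).2⟩
  let G : C(ℝ × ℝ, ℂ) := ⟨fun x => F (P x), hF.comp_continuous hP hPm⟩
  obtain ⟨e, he⟩ : ∃ e, Complex.exp e = G (0, 0) :=
    ⟨Complex.log (G (0,0)), Complex.exp_log (h0 _ (hPm _))⟩
  obtain ⟨L, ⟨-, hL⟩, -⟩ := Complex.isCoveringMapOn_exp.existsUnique_continuousMap_lifts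
    (f := G) (a₀ := ((0 : ℝ), (0 : ℝ))) (e₀ := e) he (fun x => h0 _ (hPm x))
  refine ⟨L, L.continuous, fun x hx => ?_⟩
  have h3 : Complex.exp (L x) = F (P x) := congrFun hL x
  rw [h3]
  congr 1
  ext
  · simp [P, Set.projIcc_of_mem hab hx.1]
  · simp [P, Set.projIcc_of_mem hcd hx.2]

lemma aux_homotopy {a b : ℝ} (hab : a ≤ b) {K : ℝ × ℝ → ℂ}
    (hK : ContinuousOn K (Set.Icc 0 1 ×ˢ Set.Icc a b))
    (h0 : ∀ x ∈ Set.Icc (0 : ℝ) 1 ×ˢ Set.Icc a b, K x ≠ 0)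
    (ha : ∀ s ∈ Set.Icc (0 : ℝ) 1, K (s, a) = K (0, a))
    (hb : ∀ s ∈ Set.Icc (0 : ℝ) 1, K (s, b) = K (0, b))
    {l m : ℝ → ℂ} (hl : ContinuousOn l (Set.Icc a b)) (hm : ContinuousOn m (Set.Icc a b))
    (hl' : ∀ t ∈ Set.Icc a b, Complex.exp (l t) = K (0, t))
    (hm' : ∀ t ∈ Set.Icc a b, Complex.exp (m t) = K (1, t)) :
    (l b).im - (l a).im = (m b).im - (m a).im := by
  obtain ⟨L, hL, hLK⟩ := aux_lift zero_le_one hab hK h0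
  have i0 : (0 : ℝ) ∈ Set.Icc (0 : ℝ) 1 := by simp
  have i1 : (1 : ℝ) ∈ Set.Icc (0 : ℝ) 1 := by simp
  have ia := Set.left_mem_Icc.2 hab
  have ib := Set.right_mem_Icc.2 hab
  have e1 := aux_exp_eq hab hl (m := fun t => L (0, t)) (by fun_prop)
    (fun t ht => by rw [hl' t ht, hLK (0, t) ⟨i0, ht⟩])
  have e2 := aux_exp_eq hab hm (m := fun t => L (1, t)) (by fun_prop)
    (fun t ht => by rw [hm' t ht, hLK (1, t) ⟨i1, ht⟩])
  have e3 := aux_exp_eq zero_le_one (l := fun s => L (s, a)) (m := fun _ => L (0, a))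
    (by fun_prop) (by fun_prop)
    (fun s hs => by rw [hLK (s, a) ⟨hs, ia⟩, hLK (0, a) ⟨i0, ia⟩, ha s hs])
  have e4 := aux_exp_eq zero_le_one (l := fun s => L (s, b)) (m := fun _ => L (0, b))
    (by fun_prop) (by fun_prop)
    (fun s hs => by rw [hLK (s, b) ⟨hs, ib⟩, hLK (0, b) ⟨i0, ib⟩, hb s hs])
  linarith

lemma aux_secant {η : ℝ → ℂ} (h : IsRegularSimpleCurve η) :
    ∃ L : ℝ × ℝ → ℂ, Continuous L ∧
      (∀ t ∈ Set.Icc (0 : ℝ) 1, Complex.exp (L (t, t)) = curveDeriv η t) ∧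
      ∀ s ∈ Set.Icc (0 : ℝ) 1, ∀ t ∈ Set.Icc (0 : ℝ) 1,
        ((t - s : ℝ) : ℂ) * Complex.exp (L (s, t)) = η t - η s := by
  obtain ⟨⟨hC, hne⟩, hinj⟩ := h
  have hud : UniqueDiffOn ℝ (Set.Icc (0 : ℝ) 1) := uniqueDiffOn_Icc zero_lt_one
  have hdc : ContinuousOn (curveDeriv η) (Set.Icc 0 1) :=
    hC.continuousOn_derivWithin hud le_rfl
  let D : ℝ → ℂ := fun t => curveDeriv η (Set.projIcc 0 1 zero_le_one t)
  have hD : Continuous D := hdc.comp_continuous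
    (continuous_subtype_val.comp continuous_projIcc) (fun t => (Set.projIcc 0 1 zero_le_one t).2)
  have hDeq : ∀ t ∈ Set.Icc (0 : ℝ) 1, D t = curveDeriv η t := fun t ht => by
    simp [D, Set.projIcc_of_mem zero_le_one ht]
  let F : ℝ × ℝ → ℂ := fun x => ∫ u in (0 : ℝ)..1, D (x.1 + (x.2 - x.1) * u)
  have hF : Continuous F := by
    apply intervalIntegral.continuous_parametric_intervalIntegral_of_continuous'
    fun_prop
  have hdiag : ∀ t ∈ Set.Icc (0 : ℝ) 1, F (t, t) = curveDeriv η t := fun t ht => by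
    simp [F, hDeq t ht]
  have hprim : ∀ t ∈ Set.Icc (0 : ℝ) 1, (∫ u in (0 : ℝ)..t, D u) = η t - η 0 := by
    intro t ht
    apply intervalIntegral.integral_eq_sub_of_hasDeriv_right_of_le ht.1
      (hC.continuousOn.mono (Set.Icc_subset_Icc le_rfl ht.2))
    · intro x hx
      have hx' : x ∈ Set.Icc (0 : ℝ) 1 := ⟨hx.1.le, hx.2.le.trans ht.2⟩
      have h1 := ((hC.differentiableOn one_ne_zero) x hx').hasDerivWithinAt
      have h2 : HasDerivAt η (curveDeriv η x) x :=
        h1.hasDerivAt (Icc_mem_nhds hx.1 (hx.2.trans_le ht.2))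
      rw [hDeq x hx']
      exact h2.hasDerivWithinAt
    · exact hD.intervalIntegrable _ _
  have hsec : ∀ s ∈ Set.Icc (0 : ℝ) 1, ∀ t ∈ Set.Icc (0 : ℝ) 1,
      ((t - s : ℝ) : ℂ) * F (s, t) = η t - η s := by
    intro s hs t ht
    have h2 : ((t - s : ℝ) : ℂ) * F (s, t) = ∫ u in s..t, D u := by
      rw [← Complex.real_smul]
      simp [F]
    have h3 := intervalIntegral.integral_interval_sub_left (μ := MeasureTheory.volume)
      (hD.intervalIntegrable 0 t) (hD.intervalIntegrable 0 s)
    rw [h2, ← h3, hprim t ht, hprim s hs]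
    ring
  obtain ⟨L, hL, hLF⟩ := aux_lift zero_le_one zero_le_one (hF.continuousOn
      (s := Set.Icc (0 : ℝ) 1 ×ˢ Set.Icc (0 : ℝ) 1)) (by
    rintro ⟨s, t⟩ ⟨hs, ht⟩ h0
    by_cases hst : s = t
    · subst hst
      rw [hdiag s hs] at h0
      exact hne s hs h0
    · have := hsec s hs t ht
      rw [h0, mul_zero] at this
      exact hst (hinj hs ht (sub_eq_zero.1 this.symm).symm))
  refine ⟨L, hL, fun t ht => ?_, fun s hs t ht => ?_⟩
  · rw [hLF _ ⟨ht, ht⟩, hdiag t ht]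
  · rw [hLF _ ⟨hs, ht⟩, hsec s hs t ht]

lemma aux_main (ε : ℝ) (hε : ε ∈ Set.Ioo (0 : ℝ) (1 / 2))
    (η₀ η₁ : ℝ → ℂ)
    (h₀ : Set.InjOn η₀ (Set.Icc 0 1))
    (heq0 : ∀ t ∈ Set.Icc (0 : ℝ) ε, η₀ t = η₁ t)
    (heq1 : ∀ t ∈ Set.Icc (1 - ε) (1 : ℝ), η₀ t = η₁ t)
    (H : ℝ × ℝ → ℂ)
    (Hcont : ContinuousOn H (Set.Icc 0 1 ×ˢ Set.Icc ε (1 - ε)))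
    (H0 : ∀ t ∈ Set.Icc ε (1 - ε), H (0, t) = η₀ t)
    (H1 : ∀ t ∈ Set.Icc ε (1 - ε), H (1, t) = η₁ t)
    (Hleft : ∀ s ∈ Set.Icc (0 : ℝ) 1, H (s, ε) = η₀ ε)
    (Hright : ∀ s ∈ Set.Icc (0 : ℝ) 1, H (s, 1 - ε) = η₀ (1 - ε))
    (Havoid : ∀ s ∈ Set.Icc (0 : ℝ) 1, ∀ t ∈ Set.Ioo ε (1 - ε),
      H (s, t) ∉ η₀ '' Set.Icc 0 ε ∪ η₀ '' Set.Icc (1 - ε) 1)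
    (c : ℝ) (hc : c = 0 ∨ c = 1) (l m : ℝ → ℂ) (hl : Continuous l) (hm : Continuous m)
    (hlm : Complex.exp (l c) = Complex.exp (m c))
    (hl' : ∀ t ∈ Set.Icc (0 : ℝ) 1, ((t - c : ℝ) : ℂ) * Complex.exp (l t) = η₀ t - η₀ c)
    (hm' : ∀ t ∈ Set.Icc (0 : ℝ) 1, ((t - c : ℝ) : ℂ) * Complex.exp (m t) = η₁ t - η₁ c) :
    (l 1).im - (l 0).im = (m 1).im - (m 0).im := by
  obtain ⟨hε0, hε1⟩ := hε
  have hcI : c ∈ Set.Icc (0 : ℝ) 1 := by rcases hc with rfl | rfl <;> simp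
  have hcne : ∀ t ∈ Set.Icc ε (1 - ε), t ≠ c := by
    intro t ht
    rcases hc with rfl | rfl
    · exact (hε0.trans_le ht.1).ne'
    · intro h; linarith [ht.2]
  have hcc : η₀ c = η₁ c := by
    rcases hc with rfl | rfl
    · exact heq0 _ ⟨le_rfl, hε0.le⟩
    · exact heq1 _ ⟨by linarith, le_rfl⟩
  have hcim : η₀ c ∈ η₀ '' Set.Icc 0 ε ∪ η₀ '' Set.Icc (1 - ε) 1 := by
    rcases hc with rfl | rfl
    · exact Or.inl ⟨0, ⟨le_rfl, hε0.le⟩, rfl⟩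
    · exact Or.inr ⟨1, ⟨by linarith, le_rfl⟩, rfl⟩
  have same : ∀ t ∈ Set.Icc (0 : ℝ) 1, η₀ t = η₁ t → Complex.exp (l t) = Complex.exp (m t) := by
    intro t ht he
    by_cases htc : t = c
    · rw [htc, hlm]
    · have h1 : ((t - c : ℝ) : ℂ) ≠ 0 := by exact_mod_cast sub_ne_zero.2 htc
      apply mul_left_cancel₀ h1
      rw [hl' t ht, hm' t ht, he, hcc]
  have e1 := aux_exp_eq hε0.le hl.continuousOn hm.continuousOn
    (fun t ht => same t ⟨ht.1, by linarith [ht.2]⟩ (heq0 t ht))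
  have e3 := aux_exp_eq (by linarith : 1 - ε ≤ 1) hl.continuousOn hm.continuousOn
    (fun t ht => same t ⟨by linarith [ht.1], ht.2⟩ (heq1 t ht))
  have hεm : ε ≤ 1 - ε := by linarith
  have hsub : ∀ t ∈ Set.Icc ε (1 - ε), t ∈ Set.Icc (0 : ℝ) 1 := fun t ht =>
    ⟨hε0.le.trans ht.1, by linarith [ht.2]⟩
  have hnz : ∀ t ∈ Set.Icc ε (1 - ε), ((t - c : ℝ) : ℂ) ≠ 0 := fun t ht => by
    exact_mod_cast sub_ne_zero.2 (hcne t ht)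
  have i0 : (0 : ℝ) ∈ Set.Icc (0 : ℝ) 1 := by simp
  have e2 := aux_homotopy hεm (K := fun x => (H x - η₀ c) / ((x.2 - c : ℝ) : ℂ))
    (by
      apply ContinuousOn.div (by fun_prop) (by fun_prop)
      rintro ⟨s, t⟩ ⟨hs, ht⟩
      exact hnz t ht)
    (by
      rintro ⟨s, t⟩ ⟨hs, ht⟩
      refine div_ne_zero (sub_ne_zero.2 ?_) (hnz t ht)
      have hne : η₀ t ≠ η₀ c := fun h => hcne t ht (h₀ (hsub t ht) hcI h)
      rcases eq_or_lt_of_le ht.1 with h | h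
      · simp only at h
        subst h
        rw [Hleft s hs]; exact hne
      rcases eq_or_lt_of_le ht.2 with h' | h'
      · simp only at h'
        rw [h', Hright s hs, ← h']; exact hne
      · intro h2
        exact Havoid s hs t ⟨h, h'⟩ (h2 ▸ hcim))
    (fun s hs => by simp only [Hleft s hs, Hleft 0 i0])
    (fun s hs => by simp only [Hright s hs, Hright 0 i0])
    hl.continuousOn hm.continuousOn
    (fun t ht => by
      simp only
      rw [eq_div_iff (hnz t ht), H0 t ht, mul_comm, hl' t (hsub t ht)])
    (fun t ht => by
      simp only
      rw [eq_div_iff (hnz t ht), H1 t ht, mul_comm, hm' t (hsub t ht), hcc])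
  linarith

end Aux

/-- **Homotopy invariance of total curvature (Lemma 2.6).**
If `η₀, η₁` are regular simple curves agreeing on `[0, ε]` and `[1−ε, 1]`, whose middle
parts are homotopic in the twice-slitted plane
`ℂ \ (η₀([0,ε]) ∪ η₀([1−ε,1]))` (rel endpoints), then they have the same total
curvature. -/
theorem totalCurvature_eq_of_homotopic
    (ε : ℝ) (hε : ε ∈ Set.Ioo (0 : ℝ) (1 / 2))
    (η₀ η₁ : ℝ → ℂ)
    (h₀ : IsRegularSimpleCurve η₀) (h₁ : IsRegularSimpleCurve η₁)
    (heq0 : ∀ t ∈ Set.Icc (0 : ℝ) ε, η₀ t = η₁ t)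
    (heq1 : ∀ t ∈ Set.Icc (1 - ε) (1 : ℝ), η₀ t = η₁ t)
    (H : ℝ × ℝ → ℂ)
    (Hcont : ContinuousOn H (Set.Icc 0 1 ×ˢ Set.Icc ε (1 - ε)))
    (H0 : ∀ t ∈ Set.Icc ε (1 - ε), H (0, t) = η₀ t)
    (H1 : ∀ t ∈ Set.Icc ε (1 - ε), H (1, t) = η₁ t)
    (Hleft : ∀ s ∈ Set.Icc (0 : ℝ) 1, H (s, ε) = η₀ ε)
    (Hright : ∀ s ∈ Set.Icc (0 : ℝ) 1, H (s, 1 - ε) = η₀ (1 - ε))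
    (Havoid : ∀ s ∈ Set.Icc (0 : ℝ) 1, ∀ t ∈ Set.Ioo ε (1 - ε),
      H (s, t) ∉ η₀ '' Set.Icc 0 ε ∪ η₀ '' Set.Icc (1 - ε) 1)
    (θ₀ θ₁ : ℝ → ℝ)
    (hθ₀ : IsArgLift (curveDeriv η₀) θ₀) (hθ₁ : IsArgLift (curveDeriv η₁) θ₁) :
    θ₀ 1 - θ₀ 0 = θ₁ 1 - θ₁ 0 := by
  obtain ⟨L, hL, hLd, hLs⟩ := aux_secant h₀
  obtain ⟨M, hM, hMd, hMs⟩ := aux_secant h₁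
  have i0 : (0 : ℝ) ∈ Set.Icc (0 : ℝ) 1 := by simp
  have i1 : (1 : ℝ) ∈ Set.Icc (0 : ℝ) 1 := by simp
  have hd0 : curveDeriv η₀ 0 = curveDeriv η₁ 0 := by
    apply Filter.EventuallyEq.derivWithin_eq
    · filter_upwards [self_mem_nhdsWithin, mem_nhdsWithin_of_mem_nhds (Iio_mem_nhds hε.1)]
        with t ht ht'
      exact heq0 t ⟨ht.1, le_of_lt ht'⟩
    · exact heq0 0 ⟨le_rfl, hε.1.le⟩
  have hd1 : curveDeriv η₀ 1 = curveDeriv η₁ 1 := by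
    apply Filter.EventuallyEq.derivWithin_eq
    · filter_upwards [self_mem_nhdsWithin, mem_nhdsWithin_of_mem_nhds
        (Ioi_mem_nhds (by linarith [hε.1] : 1 - ε < 1))] with t ht ht'
      exact heq1 t ⟨le_of_lt ht', ht.2⟩
    · exact heq1 1 ⟨by linarith [hε.1], le_rfl⟩
  have a0 := aux_argLift hθ₀ (l := fun t => L (t, t)) (by fun_prop) hLd
  have a1 := aux_argLift hθ₁ (l := fun t => M (t, t)) (by fun_prop) hMd
  have m0 := aux_main ε hε η₀ η₁ h₀.2 heq0 heq1 H Hcont H0 H1 Hleft Hright Havoid 0 (Or.inl rfl)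
    (fun t => L (0, t)) (fun t => M (0, t)) (by fun_prop) (by fun_prop)
    (by simp only [hLd 0 i0, hMd 0 i0, hd0]) (fun t ht => hLs 0 i0 t ht)
    (fun t ht => hMs 0 i0 t ht)
  have m1 := aux_main ε hε η₀ η₁ h₀.2 heq0 heq1 H Hcont H0 H1 Hleft Hright Havoid 1 (Or.inr rfl)
    (fun t => L (t, 1)) (fun t => M (t, 1)) (by fun_prop) (by fun_prop)
    (by simp only [hLd 1 i1, hMd 1 i1, hd1])
    (fun t ht => by
      have := hLs t ht 1 i1
      push_cast at this ⊢
      linear_combination -this)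
    (fun t ht => by
      have := hMs t ht 1 i1
      push_cast at this ⊢
      linear_combination -this)
  linarith
end

section
/- Let D ⊂ ℂ be a bounded open set (not necessarily connected) and let f : ℂ → ℂ be a homeomorphism of ℂ which is holomorphic on D. For j = 1, 2 let ηⱼ : [0,1] → ℂ be a curve regular near its endpoints, and suppose η₁(0) = η₂(0) ∈ D and η₁(1) = η₂(1) ∈ D. Then for all regular simple curves r₁, r₂, s₁, s₂ such that rⱼ represents ηⱼ and sⱼ represents f ∘ ηⱼ for j = 1, 2, one has TC(s₁) − TC(r₁) = TC(s₂) − TC(r₂), where TC denotes total curvature. -/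
open Classical in
/-- The total curvature of a curve: `θ(1) − θ(0)` for an argument lift `θ` of its
derivative (and `0` if no argument lift exists). -/
noncomputable def totalCurvature (η : ℝ → ℂ) : ℝ :=
  if h : ∃ θ : ℝ → ℝ, IsArgLift (curveDeriv η) θ then h.choose 1 - h.choose 0 else 0

/-- A curve regular near its endpoints: an injective continuous curve which is
continuously differentiable with nonvanishing derivative on `[0,ε]` and `[1−ε,1]`
for some `ε ∈ (0, 1/2)`. -/
def RegularNearEndpoints (η : ℝ → ℂ) : Prop :=
  ContinuousOn η (Set.Icc 0 1) ∧ Set.InjOn η (Set.Icc 0 1) ∧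
    ∃ ε ∈ Set.Ioo (0 : ℝ) (1 / 2),
      ContDiffOn ℝ 1 η (Set.Icc 0 ε) ∧ ContDiffOn ℝ 1 η (Set.Icc (1 - ε) 1) ∧
        ∀ t ∈ Set.Icc (0 : ℝ) ε ∪ Set.Icc (1 - ε) 1, curveDeriv η t ≠ 0

/-- `r` represents `η`: `r` agrees with `η` near the endpoints and the middle parts
are homotopic (rel endpoints) in the twice-slitted plane
`ℂ \ (η([0,ε]) ∪ η([1−ε,1]))`. -/
def Represents (r η : ℝ → ℂ) : Prop :=
  ∃ ε ∈ Set.Ioo (0 : ℝ) (1 / 2),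
    (∀ t ∈ Set.Icc (0 : ℝ) ε ∪ Set.Icc (1 - ε) 1, r t = η t) ∧
    ∃ H : ℝ × ℝ → ℂ,
      ContinuousOn H (Set.Icc 0 1 ×ˢ Set.Icc ε (1 - ε)) ∧
      (∀ t ∈ Set.Icc ε (1 - ε), H (0, t) = η t ∧ H (1, t) = r t) ∧
      (∀ s ∈ Set.Icc (0 : ℝ) 1, H (s, ε) = η ε ∧ H (s, 1 - ε) = η (1 - ε)) ∧
      ∀ s ∈ Set.Icc (0 : ℝ) 1, ∀ t ∈ Set.Ioo ε (1 - ε),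
        H (s, t) ∉ η '' Set.Icc 0 ε ∪ η '' Set.Icc (1 - ε) 1

/-- difference quotient of a curve -/
noncomputable def dq (η : ℝ → ℂ) (a t : ℝ) : ℂ :=
  if t = a then curveDeriv η a else (η t - η a) / ((t : ℂ) - a)

/-- clamp to `[a,b]` -/
noncomputable def clampR (a b t : ℝ) : ℝ := max a (min b t)

lemma clampR_cont (a b : ℝ) : Continuous (clampR a b) := by
  unfold clampR; fun_prop

lemma clampR_mem {a b : ℝ} (h : a ≤ b) (t : ℝ) : clampR a b t ∈ Set.Icc a b :=
  ⟨le_max_left _ _, max_le h (min_le_left _ _)⟩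

lemma clampR_eq {a b t : ℝ} (h : t ∈ Set.Icc a b) : clampR a b t = t := by
  unfold clampR; rw [min_eq_right h.2, max_eq_right h.1]

lemma exists_log {X : Type*} [TopologicalSpace X] [SimplyConnectedSpace X]
    [LocallyPathConnectedSpace X] (x₀ : X) (g : X → ℂ) (hg : Continuous g) (h0 : ∀ x, g x ≠ 0) :
    ∃ L : X → ℂ, Continuous L ∧ ∀ x, Complex.exp (L x) = g x := by
  obtain ⟨F, ⟨-, hF⟩, -⟩ := Complex.isCoveringMapOn_exp.existsUnique_continuousMap_lifts
    ⟨g, hg⟩ (a₀ := x₀) (Complex.exp_log (h0 x₀)) (fun x => h0 x)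
  exact ⟨F, F.continuous, fun x => congrFun hF x⟩

lemma exists_log_sq (g : ℝ × ℝ → ℂ)
    (hg : ContinuousOn g (Set.Icc 0 1 ×ˢ Set.Icc 0 1))
    (h0 : ∀ s ∈ Set.Icc (0 : ℝ) 1, ∀ t ∈ Set.Icc (0 : ℝ) 1, g (s, t) ≠ 0) :
    ∃ L : ℝ × ℝ → ℂ, Continuous L ∧
      ∀ s ∈ Set.Icc (0 : ℝ) 1, ∀ t ∈ Set.Icc (0 : ℝ) 1, Complex.exp (L (s, t)) = g (s, t) := by
  have hc := clampR_cont 0 1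
  obtain ⟨L, hL, hLe⟩ := exists_log ((0 : ℝ), (0 : ℝ))
    (fun x : ℝ × ℝ => g (clampR 0 1 x.1, clampR 0 1 x.2))
    (hg.comp_continuous (by fun_prop)
      (fun x => ⟨clampR_mem zero_le_one _, clampR_mem zero_le_one _⟩))
    (fun x => h0 _ (clampR_mem zero_le_one _) _ (clampR_mem zero_le_one _))
  refine ⟨L, hL, fun s hs t ht => ?_⟩
  rw [hLe]; simp only [clampR_eq hs, clampR_eq ht]

lemma const_of_exp (h : ℝ → ℂ) (hc : ContinuousOn h (Set.Icc 0 1)) (c : ℂ)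
    (he : ∀ t ∈ Set.Icc (0 : ℝ) 1, Complex.exp (h t) = c) : h 1 = h 0 :=
  Complex.isCoveringMap_exp.constOn_of_comp isPreconnected_Icc hc
    (fun a ha b hb => Subtype.ext ((he a ha).trans (he b hb).symm)) (by simp) (by simp)

/-- two log lifts have the same change -/
lemma log_change_unique (g A B : ℝ → ℂ) (hA : ContinuousOn A (Set.Icc 0 1))
    (hB : ContinuousOn B (Set.Icc 0 1))
    (hAe : ∀ t ∈ Set.Icc (0 : ℝ) 1, Complex.exp (A t) = g t)
    (hBe : ∀ t ∈ Set.Icc (0 : ℝ) 1, Complex.exp (B t) = g t) :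
    A 1 - A 0 = B 1 - B 0 := by
  have := const_of_exp (fun t => A t - B t) (hA.sub hB) 1 (fun t ht => by
    rw [Complex.exp_sub, hAe t ht, ← hBe t ht, div_self (Complex.exp_ne_zero _)])
  linear_combination this

lemma argLift_unique (g : ℝ → ℂ) (θ φ : ℝ → ℝ) (h1 : IsArgLift g θ) (h2 : IsArgLift g φ) :
    θ 1 - θ 0 = φ 1 - φ 0 := by
  have key : ∀ t ∈ Set.Icc (0 : ℝ) 1, Complex.exp (((θ t - φ t : ℝ) : ℂ) * Complex.I) = 1 := by
    intro t ht
    obtain ⟨a, ha, hae⟩ := h1.2 t ht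
    obtain ⟨b, hb, hbe⟩ := h2.2 t ht
    have e : (b : ℂ) = a * Complex.exp (((θ t - φ t : ℝ) : ℂ) * Complex.I) := by
      rw [← hae, ← hbe, mul_assoc, ← Complex.exp_add]
      congr 2; push_cast; ring
    have hn := congrArg norm e
    rw [norm_mul, Complex.norm_exp_ofReal_mul_I, Complex.norm_real, Complex.norm_real,
      Real.norm_of_nonneg hb.le, Real.norm_of_nonneg ha.le, mul_one] at hn
    rw [hn] at e
    have : (a : ℂ) ≠ 0 := by exact_mod_cast ha.ne'
    exact (mul_left_cancel₀ this (by rw [mul_one]; exact e)).symm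
  have := const_of_exp (fun t => ((θ t - φ t : ℝ) : ℂ) * Complex.I)
    ((Complex.continuous_ofReal.comp_continuousOn (h1.1.sub h2.1)).mul continuousOn_const) 1 key
  have := mul_right_cancel₀ Complex.I_ne_zero this
  have : θ 1 - φ 1 = θ 0 - φ 0 := by exact_mod_cast this
  linarith

lemma tc_eq (r : ℝ → ℂ) (L : ℝ → ℂ) (hL : ContinuousOn L (Set.Icc 0 1))
    (he : ∀ t ∈ Set.Icc (0 : ℝ) 1, Complex.exp (L t) = curveDeriv r t) :
    totalCurvature r = (L 1 - L 0).im := by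
  have h : IsArgLift (curveDeriv r) (fun t => (L t).im) := by
    refine ⟨Complex.continuous_im.comp_continuousOn hL, fun t ht =>
      ⟨Real.exp (L t).re, Real.exp_pos _, ?_⟩⟩
    rw [← he t ht, ← Complex.exp_add, Complex.ofReal_exp]
    congr 1
    have := Complex.re_add_im (L t)
    linear_combination -this
  have hex : ∃ θ : ℝ → ℝ, IsArgLift (curveDeriv r) θ := ⟨_, h⟩
  rw [totalCurvature, dif_pos hex, argLift_unique _ _ _ hex.choose_spec h]
  simp

lemma dq_cont (r : ℝ → ℂ) (hr : IsRegularCurve r) :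
    ContinuousOn (fun x : ℝ × ℝ => dq r x.1 x.2) (Set.Icc 0 1 ×ˢ Set.Icc 0 1) := by
  have hcd : ContinuousOn (curveDeriv r) (Set.Icc 0 1) :=
    hr.1.continuousOn_derivWithin (uniqueDiffOn_Icc zero_lt_one) le_rfl
  set R : ℝ → ℂ := fun t => curveDeriv r (clampR 0 1 t) with hR
  have hRc : Continuous R :=
    hcd.comp_continuous (clampR_cont 0 1) (fun x => clampR_mem zero_le_one _)
  have hint : ∀ t ∈ Set.Icc (0 : ℝ) 1, ∫ y in (0 : ℝ)..t, R y = r t - r 0 := by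
    intro t ht
    apply intervalIntegral.integral_eq_sub_of_hasDerivAt_of_le ht.1
    · exact hr.1.continuousOn.mono (Set.Icc_subset_Icc_right ht.2)
    · intro x hx
      have hx' : x ∈ Set.Ioo (0 : ℝ) 1 := ⟨hx.1, hx.2.trans_le ht.2⟩
      have hd := (hr.1.differentiableOn one_ne_zero x ⟨hx'.1.le, hx'.2.le⟩).hasDerivWithinAt
      have : R x = derivWithin r (Set.Icc 0 1) x := by
        simp only [hR, clampR_eq (Set.Ioo_subset_Icc_self hx'), curveDeriv]
      rw [this]
      exact hd.hasDerivAt (Icc_mem_nhds hx'.1 hx'.2)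
    · exact hRc.intervalIntegrable _ _
  have hF : Continuous (fun x : ℝ × ℝ => ∫ u in (0 : ℝ)..1, R (x.1 + (x.2 - x.1) * u)) := by
    apply intervalIntegral.continuous_parametric_intervalIntegral_of_continuous'
    exact hRc.comp (by fun_prop)
  refine hF.continuousOn.congr ?_
  rintro ⟨s, t⟩ ⟨hs, ht⟩
  simp only at hs ht ⊢
  unfold dq
  split_ifs with h
  · subst h
    simp [hR, clampR_eq hs]
  · have h1 := intervalIntegral.smul_integral_comp_add_mul (a := 0) (b := 1) R (t - s) s
    rw [mul_zero, mul_one, add_zero, add_sub_cancel,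
      ← intervalIntegral.integral_interval_sub_left (hRc.intervalIntegrable 0 t)
      (hRc.intervalIntegrable 0 s), hint t ht, hint s hs] at h1
    have h2 : (t : ℂ) - s ≠ 0 := by
      rw [← Complex.ofReal_sub]; exact_mod_cast sub_ne_zero.2 h
    rw [div_eq_iff h2, Complex.real_smul] at *
    push_cast at h1
    linear_combination -h1

lemma dq_ne (r : ℝ → ℂ) (hr : IsRegularSimpleCurve r) {s t : ℝ} (hs : s ∈ Set.Icc (0 : ℝ) 1)
    (ht : t ∈ Set.Icc (0 : ℝ) 1) : dq r s t ≠ 0 := by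
  unfold dq
  split_ifs with h
  · exact hr.1.2 s hs
  · apply div_ne_zero
    · exact sub_ne_zero.2 fun e => h (hr.2 ht hs e)
    · exact sub_ne_zero.2 fun e => h (by exact_mod_cast e)

lemma dq_symm (r : ℝ → ℂ) (s t : ℝ) : dq r s t = dq r t s := by
  unfold dq
  by_cases h : t = s
  · simp [h]
  · rw [if_neg h, if_neg (Ne.symm h), ← neg_sub (r s), ← neg_sub (s : ℂ), neg_div_neg_eq]

/-- Hopf argument -/
lemma tc_hopf (r : ℝ → ℂ) (hr : IsRegularSimpleCurve r) (A B : ℝ → ℂ)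
    (hA : ContinuousOn A (Set.Icc 0 1)) (hB : ContinuousOn B (Set.Icc 0 1))
    (hAe : ∀ t ∈ Set.Icc (0 : ℝ) 1, Complex.exp (A t) = dq r 0 t)
    (hBe : ∀ t ∈ Set.Icc (0 : ℝ) 1, Complex.exp (B t) = dq r 1 t) :
    totalCurvature r = (A 1 - A 0).im + (B 1 - B 0).im := by
  obtain ⟨L, hL, hLe⟩ := exists_log_sq _ (dq_cont r hr.1) (fun s hs t ht => dq_ne r hr hs ht)
  have h0 : (0 : ℝ) ∈ Set.Icc (0 : ℝ) 1 := by simp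
  have h1 : (1 : ℝ) ∈ Set.Icc (0 : ℝ) 1 := by simp
  have e1 := tc_eq r (fun t => L (t, t)) (by fun_prop)
    (fun t ht => by rw [hLe t ht t ht]; simp [dq])
  have e2 := log_change_unique _ A (fun t => L (0, t)) hA (by fun_prop) hAe
    (fun t ht => hLe 0 h0 t ht)
  have e3 := log_change_unique _ B (fun t => L (t, 1)) hB (by fun_prop) hBe
    (fun t ht => by rw [hLe t ht 1 h1, dq_symm])
  rw [e1, e2, e3]
  simp only [Complex.sub_im]; ring

/-- homotopy invariance -/
lemma rep_lift (r η : ℝ → ℂ) (hr : IsRegularSimpleCurve r) (h : Represents r η) (a : ℝ)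
    (ha : a = 0 ∨ a = 1) :
    ∃ A B : ℝ → ℂ, ContinuousOn A (Set.Icc 0 1) ∧ ContinuousOn B (Set.Icc 0 1) ∧
      (∀ t ∈ Set.Icc (0 : ℝ) 1, Complex.exp (A t) = dq r a t) ∧
      (∀ t ∈ Set.Icc (0 : ℝ) 1, Complex.exp (B t) = dq η a t) ∧ A 1 - A 0 = B 1 - B 0 := by
  obtain ⟨ε, ⟨hε, hε2⟩, hag, H, hH, hH01, hHe, hHn⟩ := h
  have hle : ε ≤ 1 - ε := by linarith
  have h0 : (0 : ℝ) ∈ Set.Icc (0 : ℝ) 1 := by simp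
  have h1 : (1 : ℝ) ∈ Set.Icc (0 : ℝ) 1 := by simp
  have haI : a ∈ Set.Icc (0 : ℝ) 1 := by rcases ha with rfl | rfl <;> simp
  have hau : a ∈ Set.Icc (0 : ℝ) ε ∪ Set.Icc (1 - ε) 1 := by
    rcases ha with rfl | rfl
    · left; exact ⟨le_rfl, hε.le⟩
    · right; exact ⟨by linarith, le_rfl⟩
  have hra : r a = η a := hag a hau
  have hda : curveDeriv r a = curveDeriv η a := by
    apply Filter.EventuallyEq.derivWithin_eq _ hra
    have : Metric.ball a ε ∈ nhds a := Metric.ball_mem_nhds a hε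
    filter_upwards [mem_nhdsWithin_of_mem_nhds this, self_mem_nhdsWithin] with x hx hx'
    apply hag
    rw [Metric.mem_ball, Real.dist_eq, abs_lt] at hx
    rcases ha with rfl | rfl
    · left; exact ⟨hx'.1, by linarith⟩
    · right; exact ⟨by linarith, hx'.2⟩
  set c : ℝ → ℝ := clampR ε (1 - ε) with hc
  have hcc : Continuous c := clampR_cont _ _
  have hcm : ∀ t, c t ∈ Set.Icc ε (1 - ε) := fun t => clampR_mem hle t
  have hca : ∀ t, (c t : ℂ) - a ≠ 0 := by
    intro t
    rw [← Complex.ofReal_sub]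
    have := hcm t
    have h : c t - a ≠ 0 := by
      rcases ha with rfl | rfl
      · linarith [this.1]
      · have := this.2; intro h; linarith
    exact_mod_cast h
  have hcI : ∀ t, c t ∈ Set.Icc (0 : ℝ) 1 := fun t =>
    ⟨by linarith [(hcm t).1], by linarith [(hcm t).2]⟩
  -- outside of the middle part
  have hout : ∀ t, t ∉ Set.Ioo ε (1 - ε) → ∀ s ∈ Set.Icc (0 : ℝ) 1, H (s, c t) - r (c t) = 0 := by
    intro t ht s hs
    have : c t = ε ∨ c t = 1 - ε := by
      by_cases h : t ≤ ε
      · left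
        simp only [hc, clampR]
        rw [min_eq_right (by linarith), max_eq_left h]
      · right
        have h2 : 1 - ε ≤ t := by
          by_contra h3
          exact ht ⟨not_le.1 h, not_le.1 h3⟩
        simp only [hc, clampR]
        rw [min_eq_left h2, max_eq_right hle]
    rcases this with e | e
    · rw [e, (hHe s hs).1, hag ε (Or.inl ⟨hε.le, le_rfl⟩), sub_self]
    · rw [e, (hHe s hs).2, hag (1 - ε) (Or.inr ⟨le_rfl, by linarith⟩), sub_self]
  have hin : ∀ t ∈ Set.Ioo ε (1 - ε), ∀ s : ℝ,
      dq r a t + (H (s, c t) - r (c t)) / ((c t : ℂ) - a) = (H (s, t) - η a) / ((t : ℂ) - a) := by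
    intro t ht s
    have hct : c t = t := clampR_eq (Set.Ioo_subset_Icc_self ht)
    have hne := hca t
    rw [hct] at hne ⊢
    have : t ≠ a := by
      rintro rfl
      simp at hne
    rw [dq, if_neg this, ← add_div, hra]
    congr 1; ring
  obtain ⟨L, hL, hLe⟩ := exists_log_sq
    (fun x : ℝ × ℝ => dq r a x.2 + (H (x.1, c x.2) - r (c x.2)) / ((c x.2 : ℂ) - a))
    (by
      apply ContinuousOn.add
      · exact (dq_cont r hr.1).comp (f := fun x : ℝ × ℝ => (a, x.2)) (by fun_prop)
          (fun x hx => ⟨haI, hx.2⟩)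
      · apply ContinuousOn.div
        · apply ContinuousOn.sub
          · exact hH.comp (f := fun x : ℝ × ℝ => (x.1, c x.2)) (by fun_prop)
              (fun x hx => ⟨hx.1, hcm _⟩)
          · exact (hr.1.1.continuousOn.comp_continuous hcc hcI).comp_continuousOn
              continuousOn_snd
        · fun_prop
        · intro x _; exact hca _)
    (by
      intro s hs t ht
      simp only
      by_cases hm : t ∈ Set.Ioo ε (1 - ε)
      · rw [hin t hm s]
        apply div_ne_zero
        · intro e
          apply hHn s hs t hm
          rw [sub_eq_zero.1 e, ← Set.image_union]
          exact ⟨a, hau, rfl⟩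
        · have := hca t
          rwa [show c t = t from clampR_eq (Set.Ioo_subset_Icc_self hm)] at this
      · rw [hout t hm s hs, zero_div, add_zero]
        exact dq_ne r hr haI ht)
  simp only at hLe
  refine ⟨fun t => L (1, t), fun t => L (0, t), by fun_prop, by fun_prop, ?_, ?_, ?_⟩
  · intro t ht
    rw [hLe 1 h1 t ht, (hH01 _ (hcm t)).2]; simp
  · intro t ht
    rw [hLe 0 h0 t ht]
    by_cases hm : t ∈ Set.Ioo ε (1 - ε)
    · rw [hin t hm, (hH01 t (Set.Ioo_subset_Icc_self hm)).1, dq, if_neg]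
      rintro rfl
      rcases ha with rfl | rfl
      · linarith [hm.1]
      · linarith [hm.2]
    · rw [hout t hm 0 h0, zero_div, add_zero]
      have : r t = η t := by
        apply hag
        by_cases h : t ≤ ε
        · exact Or.inl ⟨ht.1, h⟩
        · refine Or.inr ⟨?_, ht.2⟩
          by_contra h3
          exact hm ⟨not_le.1 h, not_le.1 h3⟩
      simp only [dq, this, hra, hda]
  · have e0 := const_of_exp (fun s => L (s, 0)) (by fun_prop) (dq r a 0) (fun s hs => by
      rw [hLe s hs 0 h0, hout 0 (fun h => by linarith [h.1]) s hs, zero_div, add_zero])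
    have e1 := const_of_exp (fun s => L (s, 1)) (by fun_prop) (dq r a 1) (fun s hs => by
      rw [hLe s hs 1 h1, hout 1 (fun h => by linarith [h.2]) s hs, zero_div, add_zero])
    simp only at e0 e1 ⊢
    rw [e0, e1]

lemma tc_rep (r η : ℝ → ℂ) (hr : IsRegularSimpleCurve r) (h : Represents r η) :
    ∃ A B : ℝ → ℂ, ContinuousOn A (Set.Icc 0 1) ∧ ContinuousOn B (Set.Icc 0 1) ∧
      (∀ t ∈ Set.Icc (0 : ℝ) 1, Complex.exp (A t) = dq η 0 t) ∧
      (∀ t ∈ Set.Icc (0 : ℝ) 1, Complex.exp (B t) = dq η 1 t) ∧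
      totalCurvature r = (A 1 - A 0).im + (B 1 - B 0).im := by
  obtain ⟨A, A', hA, hA', hAe, hAe', e⟩ := rep_lift r η hr h 0 (Or.inl rfl)
  obtain ⟨B, B', hB, hB', hBe, hBe', e'⟩ := rep_lift r η hr h 1 (Or.inr rfl)
  refine ⟨A', B', hA', hB', hAe', hBe', ?_⟩
  rw [← e, ← e']
  exact tc_hopf r hr A B hA hB hAe hBe

lemma dq_comp (f : ℂ → ℂ) (η : ℝ → ℂ) (hη : Set.InjOn η (Set.Icc 0 1)) {a t : ℝ}
    (ha : a ∈ Set.Icc (0 : ℝ) 1) (ht : t ∈ Set.Icc (0 : ℝ) 1)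
    (hf : DifferentiableAt ℂ f (η a)) (hd : dq η a a ≠ 0) :
    dq (f ∘ η) a t = dslope f (η a) (η t) * dq η a t := by
  by_cases h : t = a
  · subst h
    simp only [dq, if_true, dslope_same] at hd ⊢
    have hη' : DifferentiableWithinAt ℝ η (Set.Icc 0 1) t := by
      by_contra hn
      exact hd (derivWithin_zero_of_not_differentiableWithinAt hn)
    exact (hf.hasDerivAt.comp_hasDerivWithinAt t hη'.hasDerivWithinAt).derivWithin
      (uniqueDiffOn_Icc zero_lt_one t ht)
  · have hne : η t ≠ η a := fun e => h (hη ht ha e)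
    have hne' := sub_ne_zero.2 hne
    rw [dq, dq, if_neg h, if_neg h, dslope_of_ne _ hne, slope_def_field, Function.comp,
      div_mul_div_cancel₀ hne']
    rfl

lemma tc_diff (f : ℂ ≃ₜ ℂ) (η r s : ℝ → ℂ) (hη : RegularNearEndpoints η)
    (hr : IsRegularSimpleCurve r) (hs : IsRegularSimpleCurve s)
    (hr' : Represents r η) (hs' : Represents s (f ∘ η))
    (hp : DifferentiableAt ℂ f (η 0)) (hq : DifferentiableAt ℂ f (η 1)) :
    deriv f (η 0) ≠ 0 ∧ deriv f (η 1) ≠ 0 ∧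
    ∀ P Q : ℂ → ℂ, Continuous P → Continuous Q →
      (∀ z, Complex.exp (P z) = dslope f (η 0) z) → (∀ z, Complex.exp (Q z) = dslope f (η 1) z) →
      totalCurvature s - totalCurvature r =
        (P (η 1) - P (η 0)).im + (Q (η 1) - Q (η 0)).im := by
  have h0 : (0 : ℝ) ∈ Set.Icc (0 : ℝ) 1 := by simp
  have h1 : (1 : ℝ) ∈ Set.Icc (0 : ℝ) 1 := by simp
  obtain ⟨A, B, hA, hB, hAe, hBe, e⟩ := tc_rep r η hr hr'
  obtain ⟨A', B', hA', hB', hAe', hBe', e'⟩ := tc_rep s _ hs hs'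
  have n0 : dq η 0 0 ≠ 0 := hAe 0 h0 ▸ Complex.exp_ne_zero _
  have n1 : dq η 1 1 ≠ 0 := hBe 1 h1 ▸ Complex.exp_ne_zero _
  have c0 := fun t ht => dq_comp f η hη.2.1 (a := 0) (t := t) h0 ht hp n0
  have c1 := fun t ht => dq_comp f η hη.2.1 (a := 1) (t := t) h1 ht hq n1
  refine ⟨?_, ?_, ?_⟩
  · have := c0 0 h0
    rw [← hAe' 0 h0, dslope_same] at this
    exact fun h => Complex.exp_ne_zero _ (this.trans (by rw [h, zero_mul]))
  · have := c1 1 h1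
    rw [← hBe' 1 h1, dslope_same] at this
    exact fun h => Complex.exp_ne_zero _ (this.trans (by rw [h, zero_mul]))
  · intro P Q hP hQ hPe hQe
    have u0 := log_change_unique _ A' (fun t => P (η t) + A t) hA'
      ((hP.comp_continuousOn hη.1).add hA) hAe'
      (fun t ht => by rw [Complex.exp_add, hPe, hAe t ht, c0 t ht])
    have u1 := log_change_unique _ B' (fun t => Q (η t) + B t) hB'
      ((hQ.comp_continuousOn hη.1).add hB) hBe'
      (fun t ht => by rw [Complex.exp_add, hQe, hBe t ht, c1 t ht])
    rw [e, e', u0, u1]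
    simp only [Complex.sub_im, Complex.add_im]; ring

lemma exists_log_dslope (f : ℂ ≃ₜ ℂ) (p : ℂ) (hp : DifferentiableAt ℂ f p) (hd : deriv f p ≠ 0) :
    ∃ P : ℂ → ℂ, Continuous P ∧ ∀ z, Complex.exp (P z) = dslope f p z := by
  apply exists_log p
  · rw [continuous_iff_continuousAt]
    intro z
    by_cases h : z = p
    · subst h; exact continuousAt_dslope_same.2 hp
    · exact (continuousAt_dslope_of_ne h).2 f.continuous.continuousAt
  · intro z
    by_cases h : z = p
    · subst h; rwa [dslope_same]
    · rw [dslope_of_ne _ h, slope_def_field]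
      exact div_ne_zero (sub_ne_zero.2 fun e => h (f.injective e)) (sub_ne_zero.2 h)

/-- **Lemma 2.10.** Let `D ⊂ ℂ` be a bounded open set and `f` a homeomorphism of
`ℂ` holomorphic on `D`. For `j = 1, 2` let `ηⱼ` be curves regular near their
endpoints with common endpoints in `D`. Then for regular simple curves
`rⱼ` representing `ηⱼ` and `sⱼ` representing `f ∘ ηⱼ`, one has
`TC(s₁) − TC(r₁) = TC(s₂) − TC(r₂)`. -/
theorem winding_difference_well_defined
    (D : Set ℂ) (hDopen : IsOpen D) (hDbdd : Bornology.IsBounded D)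
    (f : ℂ ≃ₜ ℂ) (hf : DifferentiableOn ℂ (⇑f) D)
    (η₁ η₂ : ℝ → ℂ)
    (hη₁ : RegularNearEndpoints η₁) (hη₂ : RegularNearEndpoints η₂)
    (hstart : η₁ 0 = η₂ 0) (hstartD : η₁ 0 ∈ D)
    (hend : η₁ 1 = η₂ 1) (hendD : η₁ 1 ∈ D)
    (r₁ r₂ s₁ s₂ : ℝ → ℂ)
    (hr₁ : IsRegularSimpleCurve r₁) (hr₂ : IsRegularSimpleCurve r₂)
    (hs₁ : IsRegularSimpleCurve s₁) (hs₂ : IsRegularSimpleCurve s₂)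
    (hr₁' : Represents r₁ η₁) (hr₂' : Represents r₂ η₂)
    (hs₁' : Represents s₁ (⇑f ∘ η₁)) (hs₂' : Represents s₂ (⇑f ∘ η₂)) :
    totalCurvature s₁ - totalCurvature r₁ = totalCurvature s₂ - totalCurvature r₂ := by
  have hp := hf.differentiableAt (hDopen.mem_nhds hstartD)
  have hq := hf.differentiableAt (hDopen.mem_nhds hendD)
  obtain ⟨d0, d1, k1⟩ := tc_diff f η₁ r₁ s₁ hη₁ hr₁ hs₁ hr₁' hs₁' hp hq
  obtain ⟨-, -, k2⟩ := tc_diff f η₂ r₂ s₂ hη₂ hr₂ hs₂ hr₂' hs₂' (hstart ▸ hp) (hend ▸ hq)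
  obtain ⟨P, hP, hPe⟩ := exists_log_dslope f _ hp d0
  obtain ⟨Q, hQ, hQe⟩ := exists_log_dslope f _ hq d1
  rw [k1 P Q hP hQ hPe hQe, k2 P Q hP hQ (hstart ▸ hPe) (hend ▸ hQe), hstart, hend]
end

section
/- Let m ≥ 1. For a function θ₀ : {1, …, 2m−1} → ℝ, write N(θ₀) for the number of meanders of size m with winding function θ₀, and for noncrossing perfect matchings a and b of P write N⁺(θ₀, a) for the number of meanders of size m with winding function θ₀ whose upper matching is a, N⁻(θ₀, b) for the number with lower matching b, and N(θ₀, a, b) for the number with upper matching a and lower matching b (so N(θ₀, a, b) ∈ {0, 1}). Then for every θ₀, a, b one has N(θ₀) · N(θ₀, a, b) = N⁺(θ₀, a) · N⁻(θ₀, b). Equivalently: if a meander of size m is sampled uniformly at random, then conditioned on its winding function, the upper arc diagram M⁺ and the lower arc diagram M⁻ are conditionally independent. -/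
/-!
Meanders of size `m`.  The point set `P = {1, …, 2m−1} ∪ {∞}` (ordered with `∞`
largest) is modeled as `Fin (n+1)` with `n = 2*m - 1`, the point `k` being index
`k − 1` and `∞` being the last index `Fin.last n`.  A (perfect) matching is an
involution without fixed points, recorded via its partner function.
-/

namespace Meander

/-- A perfect matching of `Fin (n+1)`, given by its partner function: a fixed-point
free involution. -/
def IsMatching {n : ℕ} (M : Fin (n + 1) → Fin (n + 1)) : Prop :=
  Function.Involutive M ∧ ∀ x, M x ≠ x

/-- A matching is noncrossing if there are no two pairs `{a,b}`, `{c,d}` with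
`a < c < b < d`. -/
def Noncrossing {n : ℕ} (M : Fin (n + 1) → Fin (n + 1)) : Prop :=
  ¬ ∃ a c : Fin (n + 1), a < c ∧ c < M a ∧ M a < M c

/-- The graph on the point set whose edge set is `M⁺ ∪ M⁻`. -/
def meanderGraph {n : ℕ} (Mp Mm : Fin (n + 1) → Fin (n + 1)) :
    SimpleGraph (Fin (n + 1)) :=
  SimpleGraph.fromRel fun x y => Mp x = y ∨ Mm x = y

/-- A meander: a pair of noncrossing perfect matchings (upper `Mp`, lower `Mm`)
whose union is a connected graph. -/
def IsMeander {n : ℕ} (Mp Mm : Fin (n + 1) → Fin (n + 1)) : Prop :=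
  IsMatching Mp ∧ Noncrossing Mp ∧ IsMatching Mm ∧ Noncrossing Mm ∧
    (meanderGraph Mp Mm).Connected

/-- The traversal sequence: `v₀ = ∞`, and `v_{i+1}` is the `M⁻`-partner of `vᵢ`
if `i` is even and the `M⁺`-partner of `vᵢ` if `i` is odd. -/
def traversal {n : ℕ} (Mp Mm : Fin (n + 1) → Fin (n + 1)) : ℕ → Fin (n + 1)
  | 0 => Fin.last n
  | (i + 1) =>
      if i % 2 = 0 then Mm (traversal Mp Mm i) else Mp (traversal Mp Mm i)

/-- The winding increment `δᵢ`: `+π` if the step from `vᵢ` to `v_{i+1}` uses `M⁻`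
(i.e. `i` even) and goes rightward, or uses `M⁺` (i.e. `i` odd) and goes leftward;
`−π` otherwise. -/
noncomputable def windingStep {n : ℕ} (Mp Mm : Fin (n + 1) → Fin (n + 1))
    (i : ℕ) : ℝ :=
  if (i % 2 = 0 ∧ traversal Mp Mm i < traversal Mp Mm (i + 1)) ∨
      (i % 2 ≠ 0 ∧ traversal Mp Mm (i + 1) < traversal Mp Mm i)
  then Real.pi else -Real.pi

/-- The winding value along the traversal: `w₁ = 0` and `w_{i+1} = wᵢ + δᵢ`
(so `wᵢ = θ(vᵢ)` for `1 ≤ i`). -/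
noncomputable def windingValue {n : ℕ} (Mp Mm : Fin (n + 1) → Fin (n + 1)) :
    ℕ → ℝ
  | 0 => 0
  | 1 => 0
  | (i + 2) => windingValue Mp Mm (i + 1) + windingStep Mp Mm (i + 1)

/-- `θ : {1, …, n} → ℝ` is the winding function of `(Mp, Mm)`: for `1 ≤ i ≤ n`
the traversal point `vᵢ` is not `∞` and `θ(vᵢ)` equals the winding value `wᵢ`. -/
def IsWindingFunction {n : ℕ} (Mp Mm : Fin (n + 1) → Fin (n + 1))
    (θ : Fin n → ℝ) : Prop :=
  ∀ i : ℕ, 1 ≤ i → i ≤ n →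
    ∃ h : (traversal Mp Mm i : ℕ) < n,
      θ ⟨(traversal Mp Mm i : ℕ), h⟩ = windingValue Mp Mm i

end Meander

namespace Meander

/-- Noncrossing matchings on an invariant finite set admit no winding potential. -/
theorem no_potential {N : ℕ} (Θ : Fin N → ℝ) (a : Fin N → Fin N) (k : ℕ) :
    ∀ (C : Finset (Fin N)) (b : Fin N → Fin N), C.card ≤ k →
    (∀ x ∈ C, a x ∈ C) → (∀ x ∈ C, a (a x) = x) → (∀ x ∈ C, a x ≠ x) →
    (∀ x ∈ C, ∀ y ∈ C, ¬ (x < y ∧ y < a x ∧ a x < a y)) →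
    (∀ x ∈ C, x < a x → Θ x = Θ (a x) + Real.pi) →
    (∀ x ∈ C, b x ∈ C) → (∀ x ∈ C, b (b x) = x) → (∀ x ∈ C, b x ≠ x) →
    (∀ x ∈ C, ∀ y ∈ C, ¬ (x < y ∧ y < b x ∧ b x < b y)) →
    (∀ x ∈ C, x < b x → Θ (b x) = Θ x + Real.pi) → C = ∅ := by
  induction k with
  | zero => intro C b h; intros; exact Finset.card_eq_zero.mp (by omega)
  | succ k ih =>
    intro C b hC a1 a2 a3 a4 a5 b1 b2 b3 b4 b5
    by_contra hne
    obtain ⟨z, hz⟩ := Finset.nonempty_iff_ne_empty.mpr hne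
    have hL : (C.filter (fun x => x < a x)).Nonempty := by
      rcases lt_or_gt_of_ne (a3 z hz) with h | h
      · exact ⟨a z, Finset.mem_filter.mpr ⟨a1 z hz, by rw [a2 z hz]; exact h⟩⟩
      · exact ⟨z, Finset.mem_filter.mpr ⟨hz, h⟩⟩
    obtain ⟨x, hx, hmax⟩ := Finset.exists_max_image _ id hL
    obtain ⟨hxC, hxa⟩ := Finset.mem_filter.mp hx
    have hmax' : ∀ u ∈ C, u < a u → u ≤ x := fun u hu h =>
      hmax u (Finset.mem_filter.mpr ⟨hu, h⟩)
    set y := a x with hy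
    have hyC : y ∈ C := a1 x hxC
    have hax : a y = x := a2 x hxC
    have hadj : ∀ u ∈ C, x < u → u < y → False := by
      intro u hu h1 h2
      rcases lt_or_gt_of_ne (a3 u hu) with h | h
      · have h3 := a4 (a u) (a1 u hu) x hxC
        have h4 := hmax' (a u) (a1 u hu) (by rw [a2 u hu]; exact h)
        rw [a2 u hu] at h3
        have h5 : a u ≠ x := by
          intro h6
          have := a2 u hu
          rw [h6] at this
          exact absurd this (ne_of_gt h2)
        exact h3 ⟨lt_of_le_of_ne h4 h5, h1, h2⟩
      · exact absurd (hmax' u hu h) (not_le.mpr h1)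
    have hpi := Real.pi_pos
    have hΘ := a5 x hxC hxa
    rw [← hy] at hΘ
    by_cases hbx : b x = y
    · have := b5 x hxC (by rw [hbx]; exact hxa)
      rw [hbx] at this
      linarith
    set p := b x with hp
    set q := b y with hq
    have hpC : p ∈ C := b1 x hxC
    have hqC : q ∈ C := b1 y hyC
    have hbp : b p = x := b2 x hxC
    have hbq : b q = y := b2 y hyC
    have hpx : p ≠ x := b3 x hxC
    have hqy : q ≠ y := b3 y hyC
    have hqx : q ≠ x := by
      intro h; rw [h] at hbq; exact hbx (hp.trans hbq)
    have hpq : p ≠ q := by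
      intro h; rw [h, hbq] at hbp; exact absurd hbp (ne_of_gt hxa)
    have hinj : ∀ u ∈ C, ∀ v ∈ C, b u = b v → u = v := by
      intro u hu v hv h
      rw [← b2 u hu, ← b2 v hv, h]
    have hother : ∀ u ∈ C, u ≠ x → u ≠ y → u ≠ p → u ≠ q →
        b u ≠ x ∧ b u ≠ y ∧ b u ≠ p ∧ b u ≠ q := by
      intro u hu h1 h2 h3 h4
      refine ⟨fun h => h3 ?_, fun h => h4 ?_, fun h => h1 ?_, fun h => h2 ?_⟩
      · exact hinj u hu p hpC (by rw [h, hbp])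
      · exact hinj u hu q hqC (by rw [h, hbq])
      · exact hinj u hu x hxC h
      · exact hinj u hu y hyC h
    -- position facts
    have hsep : ∀ u ∈ C, u ≠ x → u ≠ y → u < x ∨ y < u := by
      intro u hu h1 h2
      by_contra h
      push Not at h
      exact hadj u hu (lt_of_le_of_ne h.1 (Ne.symm h1)) (lt_of_le_of_ne h.2 h2)
    let b' : Fin N → Fin N := fun u => if u = p then q else if u = q then p else b u
    have b'p : b' p = q := by simp [b']
    have b'q : b' q = p := by simp [b', hpq.symm]
    have b'o : ∀ u, u ≠ p → u ≠ q → b' u = b u := by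
      intro u h1 h2; simp [b', h1, h2]
    let C' := (C.erase x).erase y
    have memC' : ∀ u, u ∈ C' ↔ u ≠ y ∧ u ≠ x ∧ u ∈ C := by
      intro u; simp [C']
    have hcard : C'.card ≤ k := by
      have h1 : y ∈ C.erase x := Finset.mem_erase.mpr ⟨ne_of_gt hxa, hyC⟩
      have h2 := Finset.card_erase_of_mem h1
      have h3 := Finset.card_erase_of_mem hxC
      have : C'.card = (C.erase x).card - 1 := h2
      omega
    have hpC' : p ∈ C' := (memC' p).mpr ⟨hbx, hpx, hpC⟩
    have hqC' : q ∈ C' := (memC' q).mpr ⟨hqy, hqx, hqC⟩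
    have hempty := ih C' b' hcard ?_ ?_ ?_ ?_ ?_ ?_ ?_ ?_ ?_ ?_
    · rw [hempty] at hpC'; exact absurd hpC' (Finset.notMem_empty _)
    · intro u hu
      obtain ⟨h1, h2, h3⟩ := (memC' u).mp hu
      refine (memC' _).mpr ⟨fun h => h2 ?_, fun h => h1 ?_, a1 u h3⟩
      · rw [← a2 u h3, h, hax]
      · rw [← a2 u h3, h]
    · intro u hu; exact a2 u ((memC' u).mp hu).2.2
    · intro u hu; exact a3 u ((memC' u).mp hu).2.2
    · intro u hu v hv; exact a4 u ((memC' u).mp hu).2.2 v ((memC' v).mp hv).2.2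
    · intro u hu; exact a5 u ((memC' u).mp hu).2.2
    · intro u hu
      by_cases h1 : u = p
      · rw [h1, b'p]; exact hqC'
      by_cases h2 : u = q
      · rw [h2, b'q]; exact hpC'
      rw [b'o u h1 h2]
      obtain ⟨h3, h4, h5⟩ := (memC' u).mp hu
      have := hother u h5 h4 h3 h1 h2
      exact (memC' _).mpr ⟨this.2.1, this.1, b1 u h5⟩
    · intro u hu
      by_cases h1 : u = p
      · rw [h1, b'p, b'q]
      by_cases h2 : u = q
      · rw [h2, b'q, b'p]
      obtain ⟨h3, h4, h5⟩ := (memC' u).mp hu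
      have := hother u h5 h4 h3 h1 h2
      rw [b'o u h1 h2, b'o _ this.2.2.1 this.2.2.2, b2 u h5]
    · intro u hu
      by_cases h1 : u = p
      · rw [h1, b'p]; exact hpq.symm
      by_cases h2 : u = q
      · rw [h2, b'q]; exact hpq
      rw [b'o u h1 h2]
      exact b3 u ((memC' u).mp hu).2.2
    · have key : ∀ w ∈ C, w ≠ x → w ≠ y → w ≠ p → w ≠ q →
          ¬ (p < w ∧ w < q ∧ q < b w) ∧ ¬ (q < w ∧ w < p ∧ p < b w) ∧
          ¬ (w < p ∧ p < b w ∧ b w < q) ∧ ¬ (w < q ∧ q < b w ∧ b w < p) := by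
        intro w hw w1 w2 w3 w4
        have o := hother w hw w1 w2 w3 w4
        have hbw := b1 w hw
        have s1 := hsep w hw w1 w2
        have s2 := hsep (b w) hbw o.1 o.2.1
        have s3 := hsep p hpC hpx hbx
        have s4 := hsep q hqC hqx hqy
        have c1 := b4 p hpC w hw
        have c2 := b4 x hxC w hw
        have c3 := b4 q hqC w hw
        have c4 := b4 y hyC w hw
        have d1 := b4 w hw p hpC
        have d2 := b4 w hw x hxC
        have d3 := b4 w hw q hqC
        have d4 := b4 w hw y hyC
        rw [hbp] at c1 d1
        rw [← hp] at c2 d2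
        rw [hbq] at c3 d3
        rw [← hq] at c4 d4
        have e1 := o.1
        have e2 := o.2.1
        have e3 := o.2.2.1
        have e4 := o.2.2.2
        clear_value p q y
        clear * - s1 s2 s3 s4 c1 c2 c3 c4 d1 d2 d3 d4 e1 e2 e3 e4 w1 w2 w3 w4 hxa
        generalize b w = t at *
        omega
      intro u hu v hv
      obtain ⟨u1, u2, u3⟩ := (memC' u).mp hu
      obtain ⟨v1, v2, v3⟩ := (memC' v).mp hv
      by_cases h1 : u = p
      · by_cases h3 : v = p
        · rw [h1, h3]; exact fun h => lt_irrefl _ h.1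
        by_cases h4 : v = q
        · rw [h1, h4, b'p]; exact fun h => lt_irrefl _ h.2.1
        rw [h1, b'p, b'o v h3 h4]
        exact (key v v3 v2 v1 h3 h4).1
      by_cases h2 : u = q
      · by_cases h3 : v = q
        · rw [h2, h3]; exact fun h => lt_irrefl _ h.1
        by_cases h4 : v = p
        · rw [h2, h4, b'q]; exact fun h => lt_irrefl _ h.2.1
        rw [h2, b'q, b'o v h4 h3]
        exact (key v v3 v2 v1 h4 h3).2.1
      rw [b'o u h1 h2]
      by_cases h3 : v = p
      · rw [h3, b'p]; exact (key u u3 u2 u1 h1 h2).2.2.1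
      by_cases h4 : v = q
      · rw [h4, b'q]; exact (key u u3 u2 u1 h1 h2).2.2.2
      rw [b'o v h3 h4]
      exact b4 u u3 v v3
    · have gen : ∀ w ∈ C, (w < b w ∧ Θ (b w) = Θ w + Real.pi) ∨
          (b w < w ∧ Θ w = Θ (b w) + Real.pi) := by
        intro w hw
        rcases lt_or_gt_of_ne (b3 w hw) with h | h
        · right
          have := b5 (b w) (b1 w hw) (by rw [b2 w hw]; exact h)
          rw [b2 w hw] at this
          exact ⟨h, this⟩
        · left; exact ⟨h, b5 w hw h⟩
      have gx := gen x hxC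
      have gy := gen y hyC
      rw [← hp] at gx
      rw [← hq] at gy
      have s3 := hsep p hpC hpx hbx
      have s4 := hsep q hqC hqx hqy
      have c1 := b4 p hpC q hqC
      have c2 := b4 q hqC p hpC
      have c3 := b4 p hpC y hyC
      have c4 := b4 y hyC p hpC
      have c5 := b4 x hxC q hqC
      have c6 := b4 q hqC x hxC
      have c7 := b4 x hxC y hyC
      have c8 := b4 y hyC x hxC
      simp only [hbp, hbq, ← hp, ← hq] at c1 c2 c3 c4 c5 c6 c7 c8
      have main : (p < q → Θ q = Θ p + Real.pi) ∧ (q < p → Θ p = Θ q + Real.pi) := by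
        clear_value p q y
        rcases gx with ⟨g1, g2⟩ | ⟨g1, g2⟩ <;> rcases gy with ⟨g3, g4⟩ | ⟨g3, g4⟩ <;>
          refine ⟨fun h => ?_, fun h => ?_⟩ <;> first
          | linarith
          | (exfalso; clear * - s3 s4 c1 c2 c3 c4 c5 c6 c7 c8 g1 g3 h hxa; omega)
      intro u hu
      by_cases h1 : u = p
      · rw [h1, b'p]; exact main.1
      by_cases h2 : u = q
      · rw [h2, b'q]; exact main.2
      rw [b'o u h1 h2]
      exact b5 u ((memC' u).mp hu).2.2

section trav
variable {n : ℕ} {a b : Fin (n + 1) → Fin (n + 1)}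

theorem trav_even {i : ℕ} (h : i % 2 = 0) : traversal a b (i + 1) = b (traversal a b i) := by
  rw [traversal, if_pos h]

theorem trav_odd {i : ℕ} (h : i % 2 = 1) : traversal a b (i + 1) = a (traversal a b i) := by
  rw [traversal, if_neg (by omega)]

theorem trav_even' (hb : IsMatching b) {i : ℕ} (h : i % 2 = 0) :
    b (traversal a b (i + 1)) = traversal a b i := by
  rw [trav_even h, hb.1]

theorem trav_odd' (ha : IsMatching a) {i : ℕ} (h : i % 2 = 1) :
    a (traversal a b (i + 1)) = traversal a b i := by
  rw [trav_odd h, ha.1]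

theorem trav_ne (ha : IsMatching a) (hb : IsMatching b) (d : ℕ) :
    ∀ i, traversal a b i ≠ traversal a b (i + 2 * d + 1) := by
  induction d with
  | zero =>
    intro i h
    rcases Nat.mod_two_eq_zero_or_one i with hi | hi
    · rw [show i + 2 * 0 + 1 = i + 1 from rfl, trav_even hi] at h; exact hb.2 _ h.symm
    · rw [show i + 2 * 0 + 1 = i + 1 from rfl, trav_odd hi] at h; exact ha.2 _ h.symm
  | succ d ih =>
    intro i h
    apply ih (i + 1)
    have e : i + 2 * (d + 1) + 1 = (i + 1 + 2 * d + 1) + 1 := by ring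
    rw [e] at h
    rcases Nat.mod_two_eq_zero_or_one i with hi | hi
    · rw [trav_even hi, h, trav_even' hb (by omega)]
    · rw [trav_odd hi, h, trav_odd' ha (by omega)]

theorem trav_back (ha : IsMatching a) (hb : IsMatching b) (d : ℕ) :
    ∀ i, traversal a b i = traversal a b (i + 2 * d) →
      traversal a b 0 = traversal a b (2 * d) := by
  intro i
  induction i with
  | zero => intro h; simpa using h
  | succ i ih =>
    intro h
    apply ih
    have e : i + 1 + 2 * d = (i + 2 * d) + 1 := by ring
    rw [e] at h
    rcases Nat.mod_two_eq_zero_or_one i with hi | hi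
    · rw [← trav_even' (a := a) hb hi, h, trav_even' hb (by omega)]
    · rw [← trav_odd' (b := b) ha hi, h, trav_odd' ha (by omega)]

theorem trav_surj (ha : IsMatching a) (hb : IsMatching b)
    (h : ∀ i, 1 ≤ i → i ≤ n → traversal a b i ≠ Fin.last n) :
    ∀ x, ∃ i, i ≤ n ∧ traversal a b i = x := by
  have hlt : ∀ i j, i < j → j ≤ n → traversal a b i ≠ traversal a b j := by
    intro i j hij hj he
    rcases Nat.even_or_odd' (j - i) with ⟨d, hd | hd⟩
    · have : j = i + 2 * d := by omega
      rw [this] at he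
      have := trav_back ha hb d i he
      exact h (2 * d) (by omega) (by omega) this.symm
    · have : j = i + 2 * d + 1 := by omega
      rw [this] at he
      exact trav_ne ha hb d i he
  have hinj : Function.Injective (fun i : Fin (n + 1) => traversal a b i) := by
    intro i j hij
    rcases lt_trichotomy i j with h1 | h1 | h1
    · exact absurd hij (hlt i j h1 (by omega))
    · exact h1
    · exact absurd hij.symm (hlt j i h1 (by omega))
  intro x
  obtain ⟨i, hi⟩ := Finite.surjective_of_injective hinj x
  exact ⟨i, by omega, hi⟩

/-- Extension of the winding function by zero at infinity. -/
noncomputable def ext (θ : Fin n → ℝ) (x : Fin (n + 1)) : ℝ :=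
  if h : (x : ℕ) < n then θ ⟨x, h⟩ else 0

/-- Compatible upper matchings. -/
def GoodP (θ : Fin n → ℝ) (a : Fin (n + 1) → Fin (n + 1)) : Prop :=
  IsMatching a ∧ Noncrossing a ∧
    ∀ x, x < a x → a x ≠ Fin.last n → ext θ x = ext θ (a x) + Real.pi

/-- Compatible lower matchings. -/
def GoodM (θ : Fin n → ℝ) (b : Fin (n + 1) → Fin (n + 1)) : Prop :=
  IsMatching b ∧ Noncrossing b ∧ ext θ (b (Fin.last n)) = 0 ∧
    ∀ x, x < b x → b x ≠ Fin.last n → ext θ (b x) = ext θ x + Real.pi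

theorem isWinding_iff (θ : Fin n → ℝ) : IsWindingFunction a b θ ↔
    ∀ i, 1 ≤ i → i ≤ n → traversal a b i ≠ Fin.last n ∧
      ext θ (traversal a b i) = windingValue a b i := by
  unfold IsWindingFunction
  refine forall_congr' fun i => forall_congr' fun _ => forall_congr' fun _ => ?_
  have hl : ((traversal a b i : Fin (n + 1)) : ℕ) < n ↔ traversal a b i ≠ Fin.last n := by
    rw [Ne, Fin.ext_iff, Fin.val_last]
    omega
  constructor
  · rintro ⟨h, e⟩
    exact ⟨hl.mp h, by rw [ext, dif_pos h, e]⟩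
  · rintro ⟨h, e⟩
    refine ⟨hl.mpr h, ?_⟩
    rw [ext, dif_pos (hl.mpr h)] at e
    exact e

theorem wv_succ {i : ℕ} (h : 1 ≤ i) :
    windingValue a b (i + 1) = windingValue a b i + windingStep a b i := by
  obtain ⟨j, rfl⟩ : ∃ j, i = j + 1 := ⟨i - 1, by omega⟩
  rw [windingValue]

theorem ws_odd (hi : i % 2 = 1) : windingStep a b i =
    if traversal a b (i + 1) < traversal a b i then Real.pi else -Real.pi := by
  unfold windingStep
  simp [hi]

theorem ws_even (hi : i % 2 = 0) : windingStep a b i =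
    if traversal a b i < traversal a b (i + 1) then Real.pi else -Real.pi := by
  unfold windingStep
  simp [hi]

theorem good_of_winding (hodd : n % 2 = 1) (θ : Fin n → ℝ) (h : IsMeander a b)
    (hw : IsWindingFunction a b θ) : GoodP θ a ∧ GoodM θ b := by
  obtain ⟨ha, ha', hb, hb', -⟩ := h
  rw [isWinding_iff] at hw
  have hs := trav_surj ha hb (fun i h1 h2 => (hw i h1 h2).1)
  have hstep : ∀ i, 1 ≤ i → i + 1 ≤ n → ext θ (traversal a b (i + 1)) =
      ext θ (traversal a b i) + windingStep a b i := by
    intro i h1 h2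
    rw [(hw i h1 (by omega)).2, (hw (i + 1) (by omega) h2).2, wv_succ h1]
  have h0 : traversal a b 0 = Fin.last n := rfl
  refine ⟨⟨ha, ha', ?_⟩, hb, hb', ?_, ?_⟩
  · -- upper
    have aux : ∀ i, 1 ≤ i → i + 1 ≤ n → i % 2 = 1 →
        (traversal a b i < traversal a b (i + 1) →
          ext θ (traversal a b i) = ext θ (traversal a b (i + 1)) + Real.pi) ∧
        (traversal a b (i + 1) < traversal a b i →
          ext θ (traversal a b (i + 1)) = ext θ (traversal a b i) + Real.pi) := by
      intro i h1 h2 h3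
      have := hstep i h1 h2
      rw [ws_odd h3] at this
      constructor
      · intro h; rw [if_neg (lt_asymm h)] at this; linarith
      · intro h; rw [if_pos h] at this; exact this
    intro x hx hl
    have hxl : x ≠ Fin.last n := ne_of_lt (lt_of_lt_of_le hx (Fin.le_last _))
    obtain ⟨i, hi, ei⟩ := hs x
    obtain ⟨j, hj, ej⟩ := hs (a x)
    have hi1 : 1 ≤ i := by
      rcases Nat.eq_zero_or_pos i with h | h
      · rw [h, h0] at ei; exact absurd ei.symm hxl
      · exact h
    have hj1 : 1 ≤ j := by
      rcases Nat.eq_zero_or_pos j with h | h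
      · rw [h, h0] at ej; exact absurd ej.symm hl
      · exact h
    have hij : i ≠ j := by
      intro h; rw [h, ej] at ei; exact ha.2 x ei
    rcases Nat.mod_two_eq_zero_or_one i with pi | pi
    · obtain ⟨i, rfl⟩ : ∃ k, i = k + 1 := ⟨i - 1, by omega⟩
      have e2 : traversal a b i = a x := by rw [← ei, trav_odd' ha (by omega)]
      have := (aux i (by omega) hi (by omega)).2
      rw [ei, e2] at this
      exact this hx
    · by_cases hin : i = n
      · rcases Nat.mod_two_eq_zero_or_one j with pj | pj
        · obtain ⟨j, rfl⟩ : ∃ k, j = k + 1 := ⟨j - 1, by omega⟩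
          have e2 : traversal a b j = x := by
            rw [← ha.1 x, ← ej, trav_odd' ha (by omega)]
          have := (aux j (by omega) hj (by omega)).1
          rw [ej, e2] at this
          exact this hx
        · have e2 : traversal a b (j + 1) = x := by
            rw [trav_odd pj, ej, ha.1]
          have := (aux j (by omega) (by omega) (by omega)).2
          rw [ej, e2] at this
          exact this hx
      · have e2 : traversal a b (i + 1) = a x := by rw [trav_odd pi, ei]
        have := (aux i (by omega) (by omega) (by omega)).1
        rw [ei, e2] at this
        exact this hx
  · have h1 := (hw 1 le_rfl (by omega)).2
    have h2 : traversal a b 1 = b (Fin.last n) := trav_even (i := 0) rfl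
    rw [h2] at h1
    rw [h1, windingValue]
  · have aux : ∀ i, 1 ≤ i → i + 1 ≤ n → i % 2 = 0 →
        (traversal a b i < traversal a b (i + 1) →
          ext θ (traversal a b (i + 1)) = ext θ (traversal a b i) + Real.pi) ∧
        (traversal a b (i + 1) < traversal a b i →
          ext θ (traversal a b i) = ext θ (traversal a b (i + 1)) + Real.pi) := by
      intro i h1 h2 h3
      have := hstep i h1 h2
      rw [ws_even h3] at this
      constructor
      · intro h; rw [if_pos h] at this; exact this
      · intro h; rw [if_neg (lt_asymm h)] at this; linarith
    intro x hx hl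
    have hxl : x ≠ Fin.last n := ne_of_lt (lt_of_lt_of_le hx (Fin.le_last _))
    obtain ⟨i, hi, ei⟩ := hs x
    have hi1 : 1 ≤ i := by
      rcases Nat.eq_zero_or_pos i with h | h
      · rw [h, h0] at ei; exact absurd ei.symm hxl
      · exact h
    rcases Nat.mod_two_eq_zero_or_one i with pi | pi
    · have e2 : traversal a b (i + 1) = b x := by rw [trav_even pi, ei]
      have := (aux i (by omega) (by omega) (by omega)).1
      rw [ei, e2] at this
      exact this hx
    · obtain ⟨i, rfl⟩ : ∃ k, i = k + 1 := ⟨i - 1, by omega⟩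
      have e2 : traversal a b i = b x := by rw [← ei, trav_even' hb (by omega)]
      have hi0 : 1 ≤ i := by
        rcases Nat.eq_zero_or_pos i with h | h
        · rw [h, h0] at e2; exact absurd e2.symm hl
        · exact h
      have := (aux i hi0 hi (by omega)).2
      rw [ei, e2] at this
      exact this hx

theorem trav_ne_last (θ : Fin n → ℝ) (ha : GoodP θ a) (hb : GoodM θ b) :
    ∀ i, 1 ≤ i → i ≤ n → traversal a b i ≠ Fin.last n := by
  obtain ⟨ha, ha', ha''⟩ := ha
  obtain ⟨hb, hb', -, hb''⟩ := hb
  intro t h1 h2 ht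
  have h0 : traversal a b 0 = Fin.last n := rfl
  have hte : t % 2 = 0 := by
    by_contra h
    apply trav_ne ha hb (t / 2) 0
    rw [show 0 + 2 * (t / 2) + 1 = t by omega, ht, h0]
  let R : Finset (Fin (n + 1)) := (Finset.range t).image (traversal a b)
  have memR : ∀ x, x ∈ R ↔ ∃ i, i < t ∧ traversal a b i = x := by
    intro x; simp [R]
  have lastR : Fin.last n ∈ R := (memR _).mpr ⟨0, by omega, h0⟩
  have aR : ∀ x ∈ R, a x ∈ R := by
    intro x hx
    obtain ⟨i, hi, rfl⟩ := (memR x).mp hx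
    rcases Nat.mod_two_eq_zero_or_one i with p | p
    · rcases Nat.eq_zero_or_pos i with h | h
      · refine (memR _).mpr ⟨t - 1, by omega, ?_⟩
        rw [← trav_odd' (i := t - 1) ha (by omega), show t - 1 + 1 = t by omega, ht, h, h0]
      · obtain ⟨i, rfl⟩ : ∃ k, i = k + 1 := ⟨i - 1, by omega⟩
        exact (memR _).mpr ⟨i, by omega, (trav_odd' ha (by omega)).symm⟩
    · by_cases hit : i + 1 = t
      · rw [← trav_odd (a := a) (b := b) p, hit, ht]; exact lastR
      · exact (memR _).mpr ⟨i + 1, by omega, trav_odd p⟩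
  have bR : ∀ x ∈ R, b x ∈ R := by
    intro x hx
    obtain ⟨i, hi, rfl⟩ := (memR x).mp hx
    rcases Nat.mod_two_eq_zero_or_one i with p | p
    · exact (memR _).mpr ⟨i + 1, by omega, trav_even p⟩
    · obtain ⟨i, rfl⟩ : ∃ k, i = k + 1 := ⟨i - 1, by omega⟩
      exact (memR _).mpr ⟨i, by omega, (trav_even' hb (by omega)).symm⟩
  have aC : ∀ x ∈ Rᶜ, a x ∈ Rᶜ := by
    intro x hx
    rw [Finset.mem_compl] at hx ⊢
    intro h; apply hx; rw [← ha.1 x]; exact aR _ h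
  have bC : ∀ x ∈ Rᶜ, b x ∈ Rᶜ := by
    intro x hx
    rw [Finset.mem_compl] at hx ⊢
    intro h; apply hx; rw [← hb.1 x]; exact bR _ h
  have nl : ∀ x ∈ Rᶜ, x ≠ Fin.last n := by
    intro x hx h; rw [h, Finset.mem_compl] at hx; exact hx lastR
  have hemp := no_potential (ext θ) a _ Rᶜ b le_rfl aC (fun x _ => ha.1 x) (fun x _ => ha.2 x)
    (fun x _ y _ h => ha' ⟨x, y, h⟩) (fun x hx h => ha'' x h (nl _ (aC x hx)))
    bC (fun x _ => hb.1 x) (fun x _ => hb.2 x)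
    (fun x _ y _ h => hb' ⟨x, y, h⟩) (fun x hx h => hb'' x h (nl _ (bC x hx)))
  have hc : R.card = n + 1 := by
    rw [Finset.compl_eq_empty_iff] at hemp
    rw [hemp]; simp
  have : R.card ≤ t := by
    have := Finset.card_image_le (s := Finset.range t) (f := traversal a b)
    rwa [Finset.card_range] at this
  omega

theorem winding_of_good (θ : Fin n → ℝ) (ha : GoodP θ a) (hb : GoodM θ b) :
    IsMeander a b ∧ IsWindingFunction a b θ := by
  have hnl := trav_ne_last θ ha hb
  obtain ⟨ha, ha', ha''⟩ := ha
  obtain ⟨hb, hb', hb0, hb''⟩ := hb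
  have hs := trav_surj ha hb hnl
  refine ⟨⟨ha, ha', hb, hb', ?_⟩, ?_⟩
  · have hr : ∀ i, (meanderGraph a b).Reachable (Fin.last n) (traversal a b i) := by
      intro i
      induction i with
      | zero => exact SimpleGraph.Reachable.refl _
      | succ i ih =>
        refine ih.trans (SimpleGraph.Adj.reachable ?_)
        rw [meanderGraph, SimpleGraph.fromRel_adj]
        rcases Nat.mod_two_eq_zero_or_one i with p | p
        · rw [trav_even p]; exact ⟨(hb.2 _).symm, Or.inl (Or.inr rfl)⟩
        · rw [trav_odd p]; exact ⟨(ha.2 _).symm, Or.inl (Or.inl rfl)⟩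
    rw [SimpleGraph.connected_iff_exists_forall_reachable]
    refine ⟨Fin.last n, fun x => ?_⟩
    obtain ⟨i, -, rfl⟩ := hs x
    exact hr i
  · rw [isWinding_iff]
    intro i h1 h2
    refine ⟨hnl i h1 h2, ?_⟩
    induction i, h1 using Nat.le_induction with
    | base =>
      have e : traversal a b 1 = b (Fin.last n) := trav_even (i := 0) rfl
      rw [e, hb0, windingValue]
    | succ i h1 ih =>
      have ih := ih (by omega)
      rw [wv_succ h1, ← ih]
      have l1 := hnl i h1 (by omega)
      have l2 := hnl (i + 1) (by omega) h2
      rcases Nat.mod_two_eq_zero_or_one i with p | p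
      · rw [ws_even p]
        have e1 := trav_even (a := a) (b := b) p
        have e2 := trav_even' (a := a) hb p
        rcases lt_or_gt_of_ne (hb.2 (traversal a b i)) with h | h
        · have := hb'' (traversal a b (i + 1)) (by rw [e2, e1]; exact h) (by rw [e2]; exact l1)
          rw [e2] at this
          rw [if_neg (by rw [e1]; exact lt_asymm h)]; linarith
        · have := hb'' (traversal a b i) h (by rw [← e1]; exact l2)
          rw [if_pos (by rw [e1]; exact h), e1, this]
      · rw [ws_odd p]
        have e1 := trav_odd (a := a) (b := b) p
        have e2 := trav_odd' (b := b) ha p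
        rcases lt_or_gt_of_ne (ha.2 (traversal a b i)) with h | h
        · have := ha'' (traversal a b (i + 1)) (by rw [e2, e1]; exact h) (by rw [e2]; exact l1)
          rw [e2] at this
          rw [if_pos (by rw [e1]; exact h)]; linarith
        · have := ha'' (traversal a b i) h (by rw [← e1]; exact l2)
          rw [← e1] at this
          rw [if_neg (by rw [e1]; exact lt_asymm h)]; linarith

end trav

theorem card_prod_sub {α : Type*} (p : α × α → Prop) (A B : α → Prop)
    (h : ∀ x, p x ↔ A x.1 ∧ B x.2) :
    Nat.card {x // p x} = Nat.card {x // A x} * Nat.card {x // B x} := by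
  rw [← Nat.card_prod]
  exact Nat.card_congr ((Equiv.subtypeEquivRight h).trans Equiv.subtypeProdEquivProd)

end Meander

open Meander in
/-- **Proposition B.1 (conditional independence for uniform meanders), counting form.**
For a winding function `θ₀`, let `N(θ₀)` be the number of meanders of size `m` with
winding function `θ₀`, `N⁺(θ₀, a)` the number of those whose upper matching is `a`,
`N⁻(θ₀, b)` the number with lower matching `b`, and `N(θ₀, a, b)` the number with
upper matching `a` and lower matching `b`.  Then
`N(θ₀) · N(θ₀, a, b) = N⁺(θ₀, a) · N⁻(θ₀, b)`: conditioned on the winding function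
of a uniform meander, the upper and lower arc diagrams are conditionally
independent. -/
theorem meander_conditional_independence_counts
    (m n : ℕ) (hm : 1 ≤ m) (hn : n = 2 * m - 1)
    (θ₀ : Fin n → ℝ)
    (a b : Fin (n + 1) → Fin (n + 1))
    (ha : IsMatching a ∧ Noncrossing a) (hb : IsMatching b ∧ Noncrossing b) :
    Nat.card {p : (Fin (n + 1) → Fin (n + 1)) × (Fin (n + 1) → Fin (n + 1)) //
        IsMeander p.1 p.2 ∧ IsWindingFunction p.1 p.2 θ₀} *
      Nat.card {p : (Fin (n + 1) → Fin (n + 1)) × (Fin (n + 1) → Fin (n + 1)) //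
        IsMeander p.1 p.2 ∧ IsWindingFunction p.1 p.2 θ₀ ∧ p.1 = a ∧ p.2 = b} =
    Nat.card {p : (Fin (n + 1) → Fin (n + 1)) × (Fin (n + 1) → Fin (n + 1)) //
        IsMeander p.1 p.2 ∧ IsWindingFunction p.1 p.2 θ₀ ∧ p.1 = a} *
      Nat.card {p : (Fin (n + 1) → Fin (n + 1)) × (Fin (n + 1) → Fin (n + 1)) //
        IsMeander p.1 p.2 ∧ IsWindingFunction p.1 p.2 θ₀ ∧ p.2 = b} := by
  have key : ∀ p : (Fin (n + 1) → Fin (n + 1)) × (Fin (n + 1) → Fin (n + 1)),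
      (IsMeander p.1 p.2 ∧ IsWindingFunction p.1 p.2 θ₀) ↔ (GoodP θ₀ p.1 ∧ GoodM θ₀ p.2) :=
    fun p => ⟨fun h => good_of_winding (by omega) θ₀ h.1 h.2,
      fun h => winding_of_good θ₀ h.1 h.2⟩
  rw [card_prod_sub _ (GoodP θ₀) (GoodM θ₀) key,
    card_prod_sub _ (fun x => GoodP θ₀ x ∧ x = a) (fun x => GoodM θ₀ x ∧ x = b)
      (fun x => by rw [← and_assoc, key x]; tauto),
    card_prod_sub _ (fun x => GoodP θ₀ x ∧ x = a) (GoodM θ₀)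
      (fun x => by rw [← and_assoc, key x]; tauto),
    card_prod_sub _ (GoodP θ₀) (fun x => GoodM θ₀ x ∧ x = b)
      (fun x => by rw [← and_assoc, key x]; tauto)]
  ring
end

section
/- Let m ≥ 1 and let (M⁺, M⁻) be a meander of size m with winding function θ. Then for every pair {x, y} ∈ M⁺ with x < y < ∞ one has θ(y) = θ(x) − π, and for every pair {x, y} ∈ M⁻ with x < y < ∞ one has θ(y) = θ(x) + π. That is, M⁺ ∈ A_θ⁺ and M⁻ ∈ A_θ⁻. -/
namespace Meander

/-- `M ∈ A_θ⁺`: a noncrossing perfect matching such that `θ(y) = θ(x) − π` for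
every pair `{x, y}` of `M` with `x < y < ∞`. -/
def InAPlus {n : ℕ} (θ : Fin n → ℝ) (M : Fin (n + 1) → Fin (n + 1)) : Prop :=
  IsMatching M ∧ Noncrossing M ∧
    ∀ x y : Fin (n + 1), M x = y → x < y →
      ∀ (hy : (y : ℕ) < n) (hx : (x : ℕ) < n),
        θ ⟨(y : ℕ), hy⟩ = θ ⟨(x : ℕ), hx⟩ - Real.pi

/-- `M ∈ A_θ⁻`: a noncrossing perfect matching such that `θ(y) = θ(x) + π` for
every pair `{x, y}` of `M` with `x < y < ∞`. -/
def InAMinus {n : ℕ} (θ : Fin n → ℝ) (M : Fin (n + 1) → Fin (n + 1)) : Prop :=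
  IsMatching M ∧ Noncrossing M ∧
    ∀ x y : Fin (n + 1), M x = y → x < y →
      ∀ (hy : (y : ℕ) < n) (hx : (x : ℕ) < n),
        θ ⟨(y : ℕ), hy⟩ = θ ⟨(x : ℕ), hx⟩ + Real.pi

end Meander

namespace Meander

theorem trav_even_s9 {n : ℕ} (Mp Mm : Fin (n + 1) → Fin (n + 1)) (i : ℕ) (h : i % 2 = 0) :
    traversal Mp Mm (i + 1) = Mm (traversal Mp Mm i) := by
  simp [traversal, h]

theorem trav_odd_s9 {n : ℕ} (Mp Mm : Fin (n + 1) → Fin (n + 1)) (i : ℕ) (h : i % 2 = 1) :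
    traversal Mp Mm (i + 1) = Mp (traversal Mp Mm i) := by
  simp [traversal, h]

theorem trav_same {n : ℕ} (Mp Mm : Fin (n + 1) → Fin (n + 1))
    (hp : Function.Involutive Mp) (hq : Function.Involutive Mm) (d : ℕ) (hd : d % 2 = 0) :
    ∀ i, traversal Mp Mm i = traversal Mp Mm (i + d) →
      traversal Mp Mm 0 = traversal Mp Mm d := by
  intro i
  induction i with
  | zero => intro h; simpa using h
  | succ i ih =>
    intro h
    apply ih
    rw [show i + 1 + d = (i + d) + 1 by ring] at h
    rcases Nat.mod_two_eq_zero_or_one i with hi | hi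
    · rw [trav_even_s9 _ _ i hi, trav_even_s9 _ _ (i + d) (by omega)] at h
      exact hq.injective h
    · rw [trav_odd_s9 _ _ i hi, trav_odd_s9 _ _ (i + d) (by omega)] at h
      exact hp.injective h

theorem trav_opp {n : ℕ} (Mp Mm : Fin (n + 1) → Fin (n + 1))
    (hp : IsMatching Mp) (hq : IsMatching Mm) (k : ℕ) :
    ∀ i, traversal Mp Mm i ≠ traversal Mp Mm (i + (2 * k + 1)) := by
  induction k with
  | zero =>
    intro i h
    rcases Nat.mod_two_eq_zero_or_one i with hi | hi
    · rw [show i + (2 * 0 + 1) = i + 1 by ring, trav_even_s9 _ _ i hi] at h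
      exact hq.2 _ h.symm
    · rw [show i + (2 * 0 + 1) = i + 1 by ring, trav_odd_s9 _ _ i hi] at h
      exact hp.2 _ h.symm
  | succ k ih =>
    intro i h
    apply ih (i + 1)
    rw [show i + (2 * (k + 1) + 1) = (i + 1 + (2 * k + 1)) + 1 by ring] at h
    rcases Nat.mod_two_eq_zero_or_one i with hi | hi
    · rw [trav_even_s9 _ _ (i + 1 + (2 * k + 1)) (by omega)] at h
      rw [trav_even_s9 _ _ i hi, h, hq.1]
    · rw [trav_odd_s9 _ _ (i + 1 + (2 * k + 1)) (by omega)] at h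
      rw [trav_odd_s9 _ _ i hi, h, hp.1]

theorem trav_lt {n : ℕ} (Mp Mm : Fin (n + 1) → Fin (n + 1))
    (hp : IsMatching Mp) (hq : IsMatching Mm)
    (h0 : ∀ i, 1 ≤ i → i ≤ n → (traversal Mp Mm i : ℕ) < n)
    (i j : ℕ) (hij : i < j) (hj : j ≤ n) : traversal Mp Mm i ≠ traversal Mp Mm j := by
  intro h
  obtain ⟨d, rfl⟩ : ∃ d, j = i + d := ⟨j - i, by omega⟩
  rcases Nat.mod_two_eq_zero_or_one d with hd | hd
  · have h1 := trav_same Mp Mm hp.1 hq.1 d hd i h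
    have h2 := h0 d (by omega) (by omega)
    rw [← h1] at h2
    simp [traversal] at h2
  · obtain ⟨k, rfl⟩ : ∃ k, d = 2 * k + 1 := ⟨d / 2, by omega⟩
    exact trav_opp Mp Mm hp hq k i h

theorem trav_surj_s9 {n : ℕ} (Mp Mm : Fin (n + 1) → Fin (n + 1))
    (hinj : ∀ i j : ℕ, i < j → j ≤ n → traversal Mp Mm i ≠ traversal Mp Mm j)
    (x : Fin (n + 1)) (hx : (x : ℕ) < n) :
    ∃ i, 1 ≤ i ∧ i ≤ n ∧ traversal Mp Mm i = x := by
  have hi : Function.Injective (fun i : Fin (n + 1) => traversal Mp Mm (i : ℕ)) := by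
    intro a b hab
    by_contra hne
    rcases lt_or_gt_of_ne hne with h | h
    · exact hinj a b h (by omega) hab
    · exact hinj b a h (by omega) hab.symm
  obtain ⟨i, hi⟩ := (Finite.injective_iff_surjective.mp hi) x
  refine ⟨i, ?_, by omega, hi⟩
  rcases Nat.eq_zero_or_pos (i : ℕ) with h | h
  · simp only [h, traversal] at hi
    rw [← hi] at hx
    simp at hx
  · exact h

theorem wind_succ {n : ℕ} (Mp Mm : Fin (n + 1) → Fin (n + 1)) (i : ℕ) (h : 1 ≤ i) :
    windingValue Mp Mm (i + 1) = windingValue Mp Mm i + windingStep Mp Mm i := by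
  obtain ⟨k, rfl⟩ : ∃ k, i = k + 1 := ⟨i - 1, by omega⟩
  simp [windingValue]

end Meander

open Meander in
/-- For a meander `(M⁺, M⁻)` of size `m` with winding function `θ`, every upper arc
decreases `θ` by `π` (left-to-right) and every lower arc increases it by `π`:
`M⁺ ∈ A_θ⁺` and `M⁻ ∈ A_θ⁻`. -/
theorem meander_matchings_mem_arcSets
    (m n : ℕ) (hm : 1 ≤ m) (hn : n = 2 * m - 1)
    (Mp Mm : Fin (n + 1) → Fin (n + 1)) (θ : Fin n → ℝ)
    (hmea : IsMeander Mp Mm) (hθ : IsWindingFunction Mp Mm θ) :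
    InAPlus θ Mp ∧ InAMinus θ Mm := by
  obtain ⟨hp, hpn, hq, hqn, -⟩ := hmea
  have h0 : ∀ i, 1 ≤ i → i ≤ n → (traversal Mp Mm i : ℕ) < n := fun i h1 h2 => (hθ i h1 h2).1
  have hinj := trav_lt Mp Mm hp hq h0
  have hT : ∀ i, 1 ≤ i → i ≤ n → ∀ (x : Fin (n + 1)) (hx : (x : ℕ) < n),
      traversal Mp Mm i = x → θ ⟨x, hx⟩ = windingValue Mp Mm i := by
    intro i h1 h2 x hx h
    subst h
    exact (hθ i h1 h2).2
  have hz : ∀ y : Fin (n + 1), (y : ℕ) < n → traversal Mp Mm 0 ≠ y := by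
    intro y hy h
    rw [← h] at hy
    simp [traversal] at hy
  refine ⟨⟨hp, hpn, ?_⟩, ⟨hq, hqn, ?_⟩⟩
  · intro x y hxy hlt hy hx
    obtain ⟨i, hi1, hi2, hi⟩ := trav_surj_s9 Mp Mm hinj x hx
    obtain ⟨j, hj1, hj2, hj⟩ := trav_surj_s9 Mp Mm hinj y hy
    rw [hT i hi1 hi2 x hx hi, hT j hj1 hj2 y hy hj]
    have hyx : Mp y = x := by rw [← hxy, hp.1]
    have hu : ∀ a b, a ≤ n → b ≤ n → traversal Mp Mm a = traversal Mp Mm b → a = b := by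
      intro a b ha hb hab
      rcases lt_trichotomy a b with h | h | h
      · exact absurd hab (hinj a b h hb)
      · exact h
      · exact absurd hab.symm (hinj b a h ha)
    have hb : ∀ a, a % 2 = 0 → 1 ≤ a →
        traversal Mp Mm (a - 1) = Mp (traversal Mp Mm a) := by
      intro a ha h1
      have := trav_odd_s9 Mp Mm (a - 1) (by omega)
      rw [Nat.sub_add_cancel h1] at this
      rw [this, hp.1]
    have hc : (i % 2 = 1 ∧ j = i + 1) ∨ (j % 2 = 1 ∧ i = j + 1) := by
      rcases Nat.mod_two_eq_zero_or_one i with h | h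
      · right
        have h3 := hu (i - 1) j (by omega) hj2 (by rw [hb i h hi1, hi, hxy, hj])
        omega
      · rcases Nat.mod_two_eq_zero_or_one j with h' | h'
        · left
          have h3 := hu (j - 1) i (by omega) hi2 (by rw [hb j h' hj1, hj, hyx, hi])
          omega
        · exfalso
          rcases Nat.lt_or_ge i n with h4 | h4
          · have h3 := hu (i + 1) j (by omega) hj2
              (by rw [trav_odd_s9 _ _ i h, hi, hxy, hj])
            omega
          · rcases Nat.lt_or_ge j n with h5 | h5
            · have h3 := hu (j + 1) i (by omega) hi2
                (by rw [trav_odd_s9 _ _ j h', hj, hyx, hi])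
              omega
            · have : i = j := by omega
              subst this
              rw [hi] at hj
              exact absurd hj hlt.ne
    rcases hc with ⟨h, rfl⟩ | ⟨h, rfl⟩
    · rw [wind_succ _ _ i hi1, windingStep, hi, hj, if_neg]
      · ring
      · rintro (⟨h1, -⟩ | ⟨-, h1⟩)
        · omega
        · exact absurd h1 hlt.asymm
    · rw [wind_succ _ _ j hj1, windingStep, hi, hj, if_pos]
      · ring
      · exact Or.inr ⟨by omega, hlt⟩
  · intro x y hxy hlt hy hx
    obtain ⟨i, hi1, hi2, hi⟩ := trav_surj_s9 Mp Mm hinj x hx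
    have hyx : Mm y = x := by rw [← hxy, hq.1]
    rcases Nat.mod_two_eq_zero_or_one i with h | h
    · have hj : traversal Mp Mm (i + 1) = y := by rw [trav_even_s9 _ _ i h, hi, hxy]
      rw [hT i hi1 hi2 x hx hi, hT (i + 1) (by omega) (by omega) y hy hj,
        wind_succ _ _ i hi1, windingStep, hi, hj, if_pos]
      exact Or.inl ⟨h, hlt⟩
    · obtain ⟨j, rfl⟩ : ∃ j, i = j + 1 := ⟨i - 1, by omega⟩
      have hj : traversal Mp Mm j = y := by
        rw [trav_even_s9 _ _ j (by omega)] at hi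
        rw [← hxy, ← hi, hq.1]
      have hj1 : 1 ≤ j := by
        rcases Nat.eq_zero_or_pos j with h | h
        · subst h
          exact absurd hj (hz y hy)
        · exact h
      rw [hT (j + 1) hi1 hi2 x hx hi, hT j hj1 (by omega) y hy hj,
        wind_succ _ _ j hj1, windingStep, hi, hj, if_neg]
      · ring
      · rintro (⟨-, h1⟩ | ⟨h1, -⟩)
        · exact absurd h1 hlt.asymm
        · omega
end

section
/- Let m ≥ 1 and let θ : {1, …, 2m−1} → ℝ be any function. If M⁺ ∈ A_θ⁺ and M⁻ ∈ A_θ⁻, then the graph on vertex set P with edge set M⁺ ∪ M⁻ is connected; in particular, (M⁺, M⁻) is a meander of size m. -/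
namespace Meander

structure Good {N : ℕ} (K : Finset (Fin N)) (f : Fin N → Fin N) : Prop where
  maps : ∀ x ∈ K, f x ∈ K
  inv : ∀ x ∈ K, f (f x) = x
  ne : ∀ x ∈ K, f x ≠ x
  nc : ∀ a ∈ K, ∀ c ∈ K, a < c → c < f a → f a < f c → False

lemma exists_inner {N : ℕ} {K : Finset (Fin N)} {f : Fin N → Fin N} (hf : Good K f)
    (hK : K.Nonempty) : ∃ a ∈ K, a < f a ∧ ∀ c ∈ K, a < c → c < f a → False := by
  classical
  obtain ⟨x, hx⟩ := hK
  have hne : (K.filter fun a => a < f a).Nonempty := by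
    rcases lt_or_gt_of_ne (hf.ne x hx) with h | h
    · exact ⟨f x, by simp [hf.maps x hx, hf.inv x hx, h]⟩
    · exact ⟨x, by simp [hx, h]⟩
  obtain ⟨a, ha, hmin⟩ := Finset.exists_min_image _ (fun a => (f a : ℕ) - (a : ℕ)) hne
  simp only [Finset.mem_filter] at ha hmin
  refine ⟨a, ha.1, ha.2, fun c hc h1 h2 => ?_⟩
  have m1 := hf.maps c hc
  have i1 := hf.inv c hc
  have i2 := hf.inv a ha.1
  have n1 : ¬ f a < f c := hf.nc a ha.1 c hc h1 h2
  have n2 : ¬ f c < a := fun h => hf.nc (f c) m1 a ha.1 h (by rw [i1]; exact h1) (by rw [i1]; exact h2)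
  have n3 : f c ≠ a := fun h => by rw [h] at i1; exact absurd i1 h2.ne'
  have n4 : f c ≠ f a := fun h => by rw [h, i2] at i1; exact absurd i1 h1.ne
  have n5 := hf.ne c hc
  have k1 := hmin c
  have k2 := hmin (f c)
  rw [i1] at k2
  have ha2 := ha.2
  clear hmin
  simp only [Fin.lt_def, ne_eq, Fin.ext_iff] at *
  by_cases h : (c : ℕ) < f c
  · have := k1 ⟨hc, h⟩
    omega
  · have := k2 ⟨m1, by omega⟩
    omega

lemma nonsep {N : ℕ} {K : Finset (Fin N)} {g : Fin N → Fin N} (hg : Good K g)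
    {p x : Fin N} (hp : p ∈ K) (hx : x ∈ K) (h1 : x ≠ p) (h2 : x ≠ g p) (hlt : x < g x)
    (h : x < p ∧ p < g x) : x < g p ∧ g p < g x := by
  have e : g p ≠ g x := fun e => h1 (by rw [← hg.inv x hx, ← e, hg.inv p hp])
  constructor
  · by_contra h'
    have h'' : g p < x := lt_of_le_of_ne (not_lt.1 h') h2.symm
    exact hg.nc (g p) (hg.maps p hp) x hx h'' (by rw [hg.inv p hp]; exact h.1)
      (by rw [hg.inv p hp]; exact h.2)
  · by_contra h'
    exact hg.nc x hx p hp h.1 h.2 (lt_of_le_of_ne (not_lt.1 h') e.symm)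

lemma good_empty {N : ℕ} (θ : Fin N → ℝ) (t : ℝ) (ht : t ≠ 0) (f : Fin N → Fin N) (k : ℕ) :
    ∀ (K : Finset (Fin N)) (g : Fin N → Fin N), K.card = k → Good K f → Good K g →
    (∀ x ∈ K, x < f x → θ (f x) = θ x - t) →
    (∀ x ∈ K, x < g x → θ (g x) = θ x + t) → K = ∅ := by
  classical
  induction k using Nat.strong_induction_on with
  | _ k ih =>
  intro K g hk hf hg hfθ hgθ
  by_contra hK
  obtain ⟨a, ha, hab, hadj⟩ := exists_inner hf (Finset.nonempty_iff_ne_empty.2 hK)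
  have hb := hf.maps a ha
  have hfb := hf.inv a ha
  have hθ := hfθ a ha hab
  obtain ⟨b, hbdef⟩ : ∃ b, b = f a := ⟨_, rfl⟩
  rw [← hbdef] at hab hadj hb hfb hθ
  have hc := hg.maps a ha
  have hgc := hg.inv a ha
  have hd := hg.maps b hb
  have hgd := hg.inv b hb
  have hca := hg.ne a ha
  have hdb := hg.ne b hb
  obtain ⟨c, hcdef⟩ : ∃ c, c = g a := ⟨_, rfl⟩
  obtain ⟨d, hddef⟩ : ∃ d, d = g b := ⟨_, rfl⟩
  have t1 := hgθ a ha
  have t2 := hgθ b hb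
  rw [← hcdef] at hc hgc hca t1
  rw [← hddef] at hd hgd hdb t2
  have t3 := hgθ c hc
  have t4 := hgθ d hd
  rw [hgc] at t3
  rw [hgd] at t4
  have hcb : c ≠ b := by
    intro h
    rw [h] at t1
    have := t1 hab
    apply ht; linarith
  have hda : d ≠ a := by
    intro h
    rw [h] at hgd
    exact hcb (hcdef.trans hgd)
  have hcd : c ≠ d := by
    intro h
    rw [h, hgd] at hgc
    exact hab.ne' hgc
  -- noncrossing facts around a b
  have oc : c < a ∨ b < c := by
    rcases lt_or_gt_of_ne hca with h | h
    · exact Or.inl h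
    · rcases lt_or_gt_of_ne hcb with h' | h'
      · exact (hadj c hc h h').elim
      · exact Or.inr h'
  have od : d < a ∨ b < d := by
    rcases lt_or_gt_of_ne hda with h | h
    · exact Or.inl h
    · rcases lt_or_gt_of_ne hdb with h' | h'
      · exact (hadj d hd h h').elim
      · exact Or.inr h'
  have x1 := hg.nc a ha b hb hab
  have x2 := hg.nc c hc d hd
  have x4 := hg.nc d hd a ha
  rw [← hcdef, ← hddef] at x1
  rw [hgc, hgd] at x2
  rw [hgd, ← hcdef] at x4
  -- the new lower matching
  let g' : Fin N → Fin N := fun x => if x = c then d else if x = d then c else g x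
  have g'c : g' c = d := by simp [g']
  have g'd : g' d = c := by simp [g', hcd.symm]
  have g'o : ∀ x, x ≠ c → x ≠ d → g' x = g x := fun x h1 h2 => by simp [g', h1, h2]
  let K' := (K.erase a).erase b
  have hK' : ∀ x, x ∈ K' ↔ x ∈ K ∧ x ≠ a ∧ x ≠ b := by
    intro x; simp only [K', Finset.mem_erase]
    exact ⟨fun h => ⟨h.2.2, h.2.1, h.1⟩, fun h => ⟨h.2.2, h.2.1, h.1⟩⟩
  have hcK : c ∈ K' := (hK' c).2 ⟨hc, hca, hcb⟩
  have hdK : d ∈ K' := (hK' d).2 ⟨hd, hda, hdb⟩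
  have hsub : K' ⊂ K := by
    refine ⟨fun x hx => ((hK' x).1 hx).1, fun h => ?_⟩
    exact ((hK' a).1 (h ha)).2.1 rfl
  have go : ∀ x ∈ K', x ≠ c → x ≠ d → g x ∈ K' ∧ g x ≠ c ∧ g x ≠ d := by
    intro x hx h1 h2
    obtain ⟨hxK, hxa, hxb⟩ := (hK' x).1 hx
    have i := hg.inv x hxK
    refine ⟨(hK' _).2 ⟨hg.maps x hxK, ?_, ?_⟩, ?_, ?_⟩ <;> intro h <;> rw [h] at i
    · exact h1 (i.symm.trans hcdef.symm)
    · exact h2 (i.symm.trans hddef.symm)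
    · exact hxa (i.symm.trans hgc)
    · exact hxb (i.symm.trans hgd)
  have hf' : Good K' f := by
    refine ⟨fun x hx => ?_, fun x hx => hf.inv x ((hK' x).1 hx).1,
      fun x hx => hf.ne x ((hK' x).1 hx).1,
      fun x hx y hy => hf.nc x ((hK' x).1 hx).1 y ((hK' y).1 hy).1⟩
    obtain ⟨hxK, hxa, hxb⟩ := (hK' x).1 hx
    have i := hf.inv x hxK
    refine (hK' _).2 ⟨hf.maps x hxK, ?_, ?_⟩ <;> intro h <;> rw [h] at i
    · exact hxb (i.symm.trans hbdef.symm)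
    · exact hxa (i.symm.trans hfb)
  -- an arc that is not one of the two special arcs cannot separate c from d
  have sep : ∀ x ∈ K', x ≠ c → x ≠ d → x < g x →
      (x < c ∧ c < g x ↔ x < d ∧ d < g x) := by
    intro x hx h1 h2 hlt
    obtain ⟨⟨gK, ga, gb⟩, gc, gd⟩ := (fun h => (⟨(hK' _).1 h.1, h.2⟩ :
      (g x ∈ K ∧ g x ≠ a ∧ g x ≠ b) ∧ g x ≠ c ∧ g x ≠ d)) (go x hx h1 h2)
    obtain ⟨hxK, hxa, hxb⟩ := (hK' x).1 hx
    have ca := nonsep hg hc hxK h1 (by rw [hgc]; exact hxa) hlt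
    have ac := nonsep hg ha hxK hxa (by rw [← hcdef]; exact h1) hlt
    have db := nonsep hg hd hxK h2 (by rw [hgd]; exact hxb) hlt
    have bd := nonsep hg hb hxK hxb (by rw [← hddef]; exact h2) hlt
    rw [hgc] at ca
    rw [hgd] at db
    rw [← hcdef] at ac
    rw [← hddef] at bd
    constructor
    · intro h
      obtain ⟨u, v⟩ := ca h
      refine bd ⟨u.trans hab, lt_of_le_of_ne (not_lt.1 fun h' => hadj _ gK v h') gb.symm⟩
    · intro h
      obtain ⟨u, v⟩ := db h
      refine ac ⟨lt_of_le_of_ne (not_lt.1 fun h' => hadj _ hxK h' u) hxa, hab.trans v⟩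
  have hg' : Good K' g' := by
    refine ⟨fun x hx => ?_, fun x hx => ?_, fun x hx => ?_, fun x hx y hy => ?_⟩
    · by_cases h1 : x = c
      · rw [h1, g'c]; exact hdK
      by_cases h2 : x = d
      · rw [h2, g'd]; exact hcK
      rw [g'o x h1 h2]; exact (go x hx h1 h2).1
    · by_cases h1 : x = c
      · rw [h1, g'c, g'd]
      by_cases h2 : x = d
      · rw [h2, g'd, g'c]
      have := go x hx h1 h2
      rw [g'o x h1 h2, g'o _ this.2.1 this.2.2]
      exact hg.inv x ((hK' x).1 hx).1
    · by_cases h1 : x = c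
      · rw [h1, g'c]; exact hcd.symm
      by_cases h2 : x = d
      · rw [h2, g'd]; exact hcd
      rw [g'o x h1 h2]; exact hg.ne x ((hK' x).1 hx).1
    · intro l1 l2 l3
      by_cases hx' : x = c ∨ x = d
      · have hy1 : y ≠ c := by
          rintro rfl; rcases hx' with rfl | rfl
          · exact lt_irrefl _ l1
          · rw [g'd] at l2; exact lt_irrefl _ l2
        have hy2 : y ≠ d := by
          rintro rfl; rcases hx' with rfl | rfl
          · rw [g'c] at l2; exact lt_irrefl _ l2
          · exact lt_irrefl _ l1
        have s := sep y hy hy1 hy2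
        rw [g'o y hy1 hy2] at l3
        rcases hx' with h | h
        · rw [h] at l1 l2 l3; rw [g'c] at l2 l3
          exact lt_asymm l1 ((s (l2.trans l3)).2 ⟨l2, l3⟩).1
        · rw [h] at l1 l2 l3; rw [g'd] at l2 l3
          exact lt_asymm l1 ((s (l2.trans l3)).1 ⟨l2, l3⟩).1
      · push Not at hx'
        rw [g'o x hx'.1 hx'.2] at l2 l3
        have s := sep x hx hx'.1 hx'.2 (l1.trans l2)
        by_cases h1 : y = c
        · rw [h1] at l1 l2 l3; rw [g'c] at l3
          exact lt_asymm l3 (s.1 ⟨l1, l2⟩).2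
        by_cases h2 : y = d
        · rw [h2] at l1 l2 l3; rw [g'd] at l3
          exact lt_asymm l3 (s.2 ⟨l1, l2⟩).2
        rw [g'o y h1 h2] at l3
        exact hg.nc x ((hK' x).1 hx).1 y ((hK' y).1 hy).1 l1 l2 l3
  clear_value g' K'
  have hE := ih K'.card (hk ▸ Finset.card_lt_card hsub) K' g' rfl hf' hg'
    (fun x hx => hfθ x ((hK' x).1 hx).1) (by
      intro x hx hlt
      by_cases h1 : x = c
      · rw [h1] at hlt ⊢; rw [g'c] at hlt ⊢
        rcases oc with o1 | o1 <;> rcases od with o2 | o2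
        · exact (x2 hlt o2 hab).elim
        · have := t3 o1; have := t2 o2; linarith
        · exact absurd (hlt.trans o2) (lt_asymm (hab.trans o1))
        · exact (x1 o1 hlt).elim
      by_cases h2 : x = d
      · rw [h2] at hlt ⊢; rw [g'd] at hlt ⊢
        rcases oc with o1 | o1 <;> rcases od with o2 | o2
        · have := t3 o1; have := t4 (o2.trans hab); linarith
        · exact absurd (hlt.trans o1) (lt_asymm (hab.trans o2))
        · exact (x4 o2 hab o1).elim
        · have := t1 (hab.trans o1); have := t2 o2; linarith
      rw [g'o x h1 h2] at hlt ⊢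
      exact hgθ x ((hK' x).1 hx).1 hlt)
  rw [hE] at hcK
  simp at hcK

end Meander

open Meander in
/-- **Connectedness of pairs of compatible arc diagrams.** If `M⁺ ∈ A_θ⁺` and
`M⁻ ∈ A_θ⁻` for any function `θ`, then the graph with edge set `M⁺ ∪ M⁻` is
connected; in particular `(M⁺, M⁻)` is a meander of size `m`. -/
theorem arcSets_pair_connected
    (m n : ℕ) (hm : 1 ≤ m) (hn : n = 2 * m - 1)
    (θ : Fin n → ℝ)
    (Mp Mm : Fin (n + 1) → Fin (n + 1))
    (hp : InAPlus θ Mp) (hq : InAMinus θ Mm) :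
    (meanderGraph Mp Mm).Connected ∧ IsMeander Mp Mm := by
  have key : (meanderGraph Mp Mm).Connected := by
    classical
    obtain ⟨⟨pi1, pi2⟩, pnc, pθ⟩ := hp
    obtain ⟨⟨qi1, qi2⟩, qnc, qθ⟩ := hq
    let G := meanderGraph Mp Mm
    let K : Finset (Fin (n + 1)) := Finset.univ.filter fun x => ¬ G.Reachable (Fin.last n) x
    have hK : ∀ x, x ∈ K ↔ ¬ G.Reachable (Fin.last n) x := fun x => by simp [K]
    have ap : ∀ x, G.Adj x (Mp x) := fun x => by
      simp [G, meanderGraph, (pi2 x).symm]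
    have aq : ∀ x, G.Adj x (Mm x) := fun x => by
      simp [G, meanderGraph, (qi2 x).symm]
    have kl : ∀ x ∈ K, (x : ℕ) < n := by
      intro x hx
      rcases Nat.lt_or_ge x n with h | h
      · exact h
      · exfalso
        have : x = Fin.last n := Fin.ext (by simp; omega)
        rw [hK, this] at hx
        exact hx (SimpleGraph.Reachable.refl _)
    have mp : ∀ x ∈ K, Mp x ∈ K := fun x hx => by
      rw [hK] at hx ⊢
      exact fun h => hx (h.trans (ap x).symm.reachable)
    have mq : ∀ x ∈ K, Mm x ∈ K := fun x hx => by
      rw [hK] at hx ⊢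
      exact fun h => hx (h.trans (aq x).symm.reachable)
    have hE : K = ∅ := by
      refine good_empty (fun x => if h : (x : ℕ) < n then θ ⟨x, h⟩ else 0) Real.pi
        Real.pi_ne_zero Mp _ K Mm rfl
        ⟨mp, fun x _ => pi1 x, fun x _ => pi2 x, fun a _ c _ h1 h2 h3 => pnc ⟨a, c, h1, h2, h3⟩⟩
        ⟨mq, fun x _ => qi1 x, fun x _ => qi2 x, fun a _ c _ h1 h2 h3 => qnc ⟨a, c, h1, h2, h3⟩⟩
        ?_ ?_
      · intro x hx hlt
        have h1 := kl x hx
        have h2 := kl _ (mp x hx)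
        simp only [h1, h2, dif_pos]
        exact pθ x _ rfl hlt h2 h1
      · intro x hx hlt
        have h1 := kl x hx
        have h2 := kl _ (mq x hx)
        simp only [h1, h2, dif_pos]
        exact qθ x _ rfl hlt h2 h1
    have hr : ∀ x, G.Reachable (Fin.last n) x := by
      intro x
      by_contra h
      have := (hK x).2 h
      rw [hE] at this
      simp at this
    exact ⟨fun x y => (hr x).symm.trans (hr y)⟩
  exact ⟨key, hp.1, hp.2.1, hq.1, hq.2.1, key⟩
end
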